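/- Let G be a finite planar graph with v(G) vertices and maximal vertex degree Δ(G). Then width(G) ≤ (6√2 + 4√3)·Δ(G)·√(v(G)). -/

import Mathlib

/-!
Common vocabulary for formalising Lackenby, "Spectral geometry, link
complements and surgery diagrams".
-/

/-- A finite multigraph: finite vertex and edge types, where each edge is
assigned an unordered pair of endpoints (loops and multiple edges allowed). -/
structure FinMultigraph where
  /-- the vertex type -/
  V : Type
  /-- the edge type -/
  E : Type
  [fintypeV : Fintype V]
  [fintypeE : Fintype E]
  [decEqV : DecidableEq V]
  /-- the two (possibly equal) endpoints of each edge -/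
  ends : E → Sym2 V

attribute [instance] FinMultigraph.fintypeV FinMultigraph.fintypeE FinMultigraph.decEqV

namespace FinMultigraph

/-- `∂A` : the set of edges with one endpoint in `A` and one endpoint not in `A`. -/
def edgeBoundary (G : FinMultigraph) (A : Set G.V) : Set G.E :=
  {e | ∃ u v : G.V, G.ends e = s(u, v) ∧ u ∈ A ∧ v ∉ A}

/-- The number `v(G)` of vertices of `G`. -/
def order (G : FinMultigraph) : ℕ := Fintype.card G.V

/-- The width of a total ordering `φ` of the vertices of `G`:
the maximum over `i` of `|∂(φ({1,…,i}))|`. -/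
noncomputable def orderingWidth (G : FinMultigraph) (φ : Fin G.order ≃ G.V) : ℕ :=
  Finset.sup Finset.univ fun i : Fin G.order =>
    (G.edgeBoundary (⇑φ '' {j | j ≤ i})).ncard

/-- The width of `G` : the minimum of the widths of all total orderings of its
vertices. -/
noncomputable def width (G : FinMultigraph) : ℕ :=
  sInf {w | ∃ φ : Fin G.order ≃ G.V, G.orderingWidth φ = w}

/-- The degree (valence) of a vertex: the number of edge-ends at `v`
(loops at `v` count twice). -/
noncomputable def degree (G : FinMultigraph) (v : G.V) : ℕ :=
  {e | v ∈ G.ends e}.ncard + {e | G.ends e = s(v, v)}.ncard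

/-- The maximal vertex degree `Δ(G)`. -/
noncomputable def maxDegree (G : FinMultigraph) : ℕ :=
  Finset.sup Finset.univ G.degree

/-- `G` is planar: it admits a topological embedding into the plane, given by an
injective placement of the vertices together with arcs realising the edges which
are embedded, meet the vertices only at their endpoints, and are pairwise
internally disjoint. -/
def IsPlanar (G : FinMultigraph) : Prop :=
  ∃ (fv : G.V → ℝ × ℝ) (fe : G.E → ℝ → ℝ × ℝ),
    Function.Injective fv ∧
    (∀ e, ContinuousOn (fe e) (Set.Icc 0 1)) ∧
    (∀ e, ∃ u v : G.V, G.ends e = s(u, v) ∧ fe e 0 = fv u ∧ fe e 1 = fv v) ∧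
    (∀ e, Set.InjOn (fe e) (Set.Ioo 0 1)) ∧
    (∀ e t, t ∈ Set.Ioo (0:ℝ) 1 → fe e t ∉ Set.range fv) ∧
    (∀ e e', e ≠ e' → ∀ t ∈ Set.Ioo (0:ℝ) 1, ∀ t' ∈ Set.Ioo (0:ℝ) 1,
      fe e t ≠ fe e' t')

/-- The Cheeger constant of a finite graph:
`h(G) = min { |∂A| / |A| : A ⊆ V(G), 0 < |A| ≤ v(G)/2 }`. -/
noncomputable def cheegerConst (G : FinMultigraph) : ℝ :=
  sInf {x : ℝ | ∃ A : Set G.V, 0 < A.ncard ∧ (A.ncard : ℝ) ≤ (G.order : ℝ) / 2 ∧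
    x = ((G.edgeBoundary A).ncard : ℝ) / (A.ncard : ℝ)}

end FinMultigraph

/-- Sort a finite multiset of naturals into descending order. -/
def descSort (m : Multiset ℕ) : List ℕ := (m.sort (· ≤ ·)).reverse

/-- Lexicographic comparison of multisets of naturals: each multiset is
reordered into a descending sequence and the sequences are compared
lexicographically. -/
def MultisetLexLE (m₁ m₂ : Multiset ℕ) : Prop :=
  descSort m₁ = descSort m₂ ∨ List.Lex (· < ·) (descSort m₁) (descSort m₂)

/-- `v₃`, the volume of the regular hyperbolic ideal tetrahedron:
`v₃ = 3Λ(π/3) ≈ 1.0149`, where `Λ(θ) = -∫₀^θ log |2 sin t| dt` is the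
Lobachevsky function. -/
noncomputable def v3 : ℝ := -3 * ∫ t in (0:ℝ)..(Real.pi / 3), Real.log (2 * Real.sin t)

/-- An abstract framework bundling the standard (informal) notions of links in
the 3-sphere, their diagrams, compact orientable 3-manifolds, rational surgery
diagrams, and the hyperbolic-geometric and width invariants used in Lackenby,
"Spectral geometry, link complements and surgery diagrams". -/
structure LinkTheory where
  /-- Links in the 3-sphere, up to ambient isotopy. -/
  Link : Type
  /-- Link diagrams (in the plane, equivalently in the 2-sphere). -/
  Diagram : Type
  /-- `IsDiagramOf D L` means that `D` is a diagram of the link `L`. -/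
  IsDiagramOf : Diagram → Link → Prop
  /-- Every link has a diagram. -/
  exists_diagram : ∀ L : Link, ∃ D, IsDiagramOf D L
  /-- The crossing number `c(D)` of a diagram. -/
  crossings : Diagram → ℕ
  /-- The twist number `t(D)` of a diagram: the number of twist regions, where a
  twist region is either a maximal collection of bigon regions whose union is
  connected, or a single crossing adjacent to no bigon regions. -/
  twists : Diagram → ℕ
  /-- Every twist region contains a crossing, so `t(D) ≤ c(D)`. -/
  twists_le_crossings : ∀ D, twists D ≤ crossings D
  /-- `D` is an alternating diagram. -/
  IsAlternating : Diagram → Prop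
  /-- `D` is highly twisted: each twist region contains at least 7 crossings and
  the diagram is alternating within each twist region. -/
  IsHighlyTwisted : Diagram → Prop
  /-- `D` is twist-reduced. -/
  IsTwistReduced : Diagram → Prop
  /-- The underlying 4-valent planar graph of `D` has no edge loops. -/
  HasNoEdgeLoops : Diagram → Prop
  /-- `L` is a hyperbolic link: its exterior admits a complete finite-volume
  hyperbolic structure. -/
  IsHyperbolicLink : Link → Prop
  /-- The volume of the complete hyperbolic metric on the complement `S³ - L`
  of a hyperbolic link `L`. -/
  vol : Link → ℝ
  /-- Hyperbolic volume is positive. -/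
  vol_pos : ∀ L, IsHyperbolicLink L → 0 < vol L
  /-- The Cheeger constant `h(S³ - L)` of the complement of a hyperbolic link:
  the infimum over compact codimension-zero submanifolds `A` with volume at most
  half that of the complement of `Area(∂A)/Volume(A)`. -/
  cheeger : Link → ℝ
  /-- `λ₁(S³ - L)`: the infimum of the nonzero spectrum of the Laplacian on the
  complement of a hyperbolic link. -/
  lambda1 : Link → ℝ
  /-- The max-width of a diagram: the maximum over `t ∈ ℝ` of the number of
  intersections of `ℝ × {t}` with the link projection. -/
  maxWidthD : Diagram → ℕ
  /-- The max-width of a link: the minimal max-width of any of its diagrams. -/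
  maxWidth : Link → ℕ
  maxWidth_def : ∀ L, maxWidth L = sInf {w | ∃ D, IsDiagramOf D L ∧ maxWidthD D = w}
  /-- The lex-width of a diagram (whose height function is Morse on the link with
  critical points at distinct values): the multiset whose members are the numbers
  of intersections of the link projection with `ℝ × {t}`, one for each of the open
  intervals into which the critical values divide `ℝ`. -/
  lexWidthD : Diagram → Multiset ℕ
  /-- The largest member of the lex-width multiset of a diagram is its max-width. -/
  maxWidthD_eq_sup_lexWidthD : ∀ D, maxWidthD D = (lexWidthD D).sup
  /-- `D` is a bridge diagram: the height function restricted to the link is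
  Morse and all of its local maxima occur above all of its local minima. -/
  IsBridgeDiagram : Diagram → Prop
  /-- The bridge number `b(L)`: the minimal number of local maxima in any bridge
  diagram of `L`. -/
  bridgeNumber : Link → ℕ
  /-- `L` is a knot (a link with one component). -/
  IsKnot : Link → Prop
  /-- The knot is tangle-composite: it admits an essential Conway sphere
  decomposition, i.e. a 2-sphere meeting it transversely in four points and
  splitting it into nontrivial tangles. -/
  IsTangleComposite : Link → Prop
  /-- The underlying 4-valent planar graph `G(D)` of a diagram, whose vertices
  are the crossings of `D`. -/
  graphOf : Diagram → FinMultigraph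
  graphOf_planar : ∀ D, (graphOf D).IsPlanar
  graphOf_degree : ∀ D v, (graphOf D).degree v = 4
  graphOf_order : ∀ D, (graphOf D).order = crossings D
  /-- The twist graph `T(D)`: one vertex for each twist region of `G(D)` and one
  edge for each edge of `G(D)` not lying in a twist region. -/
  twistGraphOf : Diagram → FinMultigraph
  twistGraphOf_order : ∀ D, (twistGraphOf D).order = twists D
  /-- Compact orientable 3-manifolds, up to homeomorphism. -/
  Manifold : Type
  /-- `M` is hyperbolic: its interior admits a complete finite-volume hyperbolic
  structure. -/
  IsHyperbolicManifold : Manifold → Prop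
  /-- `M` is closed: it has empty boundary. -/
  IsClosedManifold : Manifold → Prop
  /-- The volume of the hyperbolic metric on (the interior of) `M`. -/
  volM : Manifold → ℝ
  volM_pos : ∀ M, IsHyperbolicManifold M → 0 < volM M
  /-- The Cheeger constant `h(M)`: the infimum over compact codimension-zero
  submanifolds `A` with volume at most half that of `M` of `Area(∂A)/Volume(A)`. -/
  cheegerM : Manifold → ℝ
  /-- `λ₁(M)`: the infimum of the nonzero spectrum of the Laplacian on `M`. -/
  lambda1M : Manifold → ℝ
  /-- The Heegaard width of `M`: the minimal width `maxᵢ χ₋(∂₊Cᵢ)` of any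
  generalised Heegaard splitting `{C₁, …, Cₙ}` of `M`. -/
  heegWidth : Manifold → ℕ
  /-- The exterior of a link: the complement in `S³` of an open regular
  neighbourhood of the link. -/
  exterior : Link → Manifold
  /-- The exterior of a hyperbolic link carries the hyperbolic structure of the
  complement. -/
  exterior_hyperbolic : ∀ L, IsHyperbolicLink L ↔ IsHyperbolicManifold (exterior L)
  volM_exterior : ∀ L, IsHyperbolicLink L → volM (exterior L) = vol L
  cheegerM_exterior : ∀ L, IsHyperbolicLink L → cheegerM (exterior L) = cheeger L
  lambda1M_exterior : ∀ L, IsHyperbolicLink L → lambda1M (exterior L) = lambda1 L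
  /-- `M` is a congruence arithmetic hyperbolic 3-manifold: its fundamental group
  is a congruence subgroup of an arithmetic lattice in `PSL(2, ℂ)`. -/
  IsCongruenceArithmetic : Manifold → Prop
  /-- Rational surgery diagrams: a link diagram together with an assignment of an
  element of `ℚ ∪ {∞}` to some of the components of the link. -/
  SurgeryDiagram : Type
  /-- The underlying link diagram of a rational surgery diagram. -/
  underlyingDiagram : SurgeryDiagram → Diagram
  /-- `Presents S M` means that `M` is obtained from the exterior of the link of
  `S` by attaching solid tori along the labelled boundary components according
  to the labels, i.e. `S` is a rational surgery diagram for `M`. -/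
  Presents : SurgeryDiagram → Manifold → Prop
  /-- Finite graphs embedded in the 2-sphere. -/
  EmbeddedGraph : Type
  /-- The underlying abstract multigraph of an embedded graph. -/
  absGraph : EmbeddedGraph → FinMultigraph
  /-- The Morse width of a graph `G` embedded in `S²`: the minimum, over all
  Morse functions `f : S² → ℝ` that are generic with respect to `G` (critical
  points at distinct values, vertices at distinct values), of
  `max { |f⁻¹(t) ∩ G| : t ∈ ℝ }`. -/
  morseWidth : EmbeddedGraph → ℕ
  /-- The underlying 4-valent planar graph `G(D)`, regarded as a graph embedded
  in the diagram 2-sphere. -/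
  embGraphOf : Diagram → EmbeddedGraph
  absGraph_embGraphOf : ∀ D, absGraph (embGraphOf D) = graphOf D

namespace LinkTheory

/-- `L` is an alternating link: it admits an alternating diagram. -/
def IsAlternatingLink (T : LinkTheory) (L : T.Link) : Prop :=
  ∃ D, T.IsDiagramOf D L ∧ T.IsAlternating D

/-- `L` is a highly twisted link: it admits a twist-reduced highly twisted
diagram having no edge loops. -/
def IsHighlyTwistedLink (T : LinkTheory) (L : T.Link) : Prop :=
  ∃ D, T.IsDiagramOf D L ∧ T.IsHighlyTwisted D ∧ T.IsTwistReduced D ∧ T.HasNoEdgeLoops D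

/-- `m` is the lex-width of the link `L`: it is realised by a diagram of `L` and
is lexicographically minimal among the lex-widths of all diagrams of `L`. -/
def IsLexWidthOf (T : LinkTheory) (m : Multiset ℕ) (L : T.Link) : Prop :=
  (∃ D, T.IsDiagramOf D L ∧ T.lexWidthD D = m) ∧
  ∀ D, T.IsDiagramOf D L → MultisetLexLE m (T.lexWidthD D)

end LinkTheory

/-!
A planar graph has no `K₅` minor. For disjoint paths `γ` and `δ` in the plane, a continuous
logarithm of `γ s - δ t` shows that its increments along the four sides of the parameter square sum
to zero. If the pairs of disjoint edges of `K₅` were all drawn disjointly, summing these identities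
over the fifteen pairs would give `0` on one side and a number congruent to `2` modulo `4` on the
other, because a convex pentagon has an odd number of crossing pairs of diagonals.

By the argument of Alon, Seymour and Thomas, a graph on `n` vertices without a `K₅` minor has a set
`S` of at most `5√(3n)` vertices whose removal leaves components with at most `n / 2` vertices.
Order these components recursively, one after the other, and insert each vertex of `S` at a weighted
median of its neighbours, so that at most half of its edges are cut at any point. This adds at most
`Δ|S| / 2 + Δ` to the width, whence for `c = 6√2 + 4√3` and `n > 100` the new width is at most
`(c / √2 + 5√3 / 2 + 1 / 10) Δ√n ≤ cΔ√n`. For `n ≤ 100` the bound `Δn / 2` suffices.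
-/

namespace PlanarWidth

/-! ### Logarithms along paths -/

section Logarithm

variable {X : Type*} [TopologicalSpace X] [LocallyPathConnectedSpace X] [SimplyConnectedSpace X]

lemma exists_continuous_exp_eq {f : X → ℂ} (hf : Continuous f) (h0 : ∀ x, f x ≠ 0) :
    ∃ L : X → ℂ, Continuous L ∧ ∀ x, Complex.exp (L x) = f x := by
  obtain ⟨x₀⟩ : Nonempty X := inferInstance
  obtain ⟨L, ⟨-, hL⟩, -⟩ := Complex.isCoveringMapOn_exp.existsUnique_continuousMap_lifts
    ⟨f, hf⟩ (a₀ := x₀) (Complex.exp_log (h0 x₀)) (by simpa using h0)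
  exact ⟨L, L.continuous, congrFun hL⟩

lemma sub_eq_sub_of_exp_eq_mul_exp {L M : X → ℂ} (hL : Continuous L) (hM : Continuous M) {c : ℂ}
    (h : ∀ x, Complex.exp (L x) = c * Complex.exp (M x)) (x y : X) : L y - L x = M y - M x := by
  have hlift := Complex.isCoveringMapOn_exp.existsUnique_continuousMap_lifts
    ⟨fun z => Complex.exp (L z), by fun_prop⟩ (a₀ := x) (e₀ := L x) (by simp) (by simp)
  have hM' : ∀ z, Complex.exp (M z + (L x - M x)) = Complex.exp (L z) := fun z => by
    rw [Complex.exp_add, Complex.exp_sub, h, h]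
    field_simp
  have heq := hlift.unique (y₁ := ⟨L, hL⟩) (y₂ := ⟨fun z => M z + (L x - M x), by fun_prop⟩)
    ⟨rfl, rfl⟩ ⟨by simp, funext hM'⟩
  have hy : L y = M y + (L x - M x) := DFunLike.congr_fun heq y
  rw [hy]
  ring

end Logarithm

section LogIncrement

variable {a b c d z : ℂ}

open Classical in
/-- The increment of a continuous branch of `log (γ - z)` along the path `γ`, that is, the integral
of `dw / (w - z)` along `γ`. Its value is `0` when there is no such branch, i.e. when `γ` meets
`z`. -/
noncomputable def logIncrement (γ : Path a b) (z : ℂ) : ℂ :=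
  if h : ∃ L : ℝ → ℂ, Continuous L ∧ ∀ s, Complex.exp (L s) = γ.extend s - z then
    h.choose 1 - h.choose 0
  else 0

lemma logIncrement_eq {γ : Path a b} {L : ℝ → ℂ} (hL : Continuous L) {r : ℂ}
    (h : ∀ s, Complex.exp (L s) = r * (γ.extend s - z)) : logIncrement γ z = L 1 - L 0 := by
  have hr : r ≠ 0 := left_ne_zero_of_mul (h 0 ▸ Complex.exp_ne_zero (L 0))
  have hex : ∃ M : ℝ → ℂ, Continuous M ∧ ∀ s, Complex.exp (M s) = γ.extend s - z :=
    ⟨fun s => L s - Complex.log r, by fun_prop, fun s => by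
      rw [Complex.exp_sub, Complex.exp_log hr, h, mul_div_cancel_left₀ _ hr]⟩
  rw [logIncrement, dif_pos hex]
  exact (sub_eq_sub_of_exp_eq_mul_exp hL hex.choose_spec.1
    (fun s => by rw [hex.choose_spec.2, h]) 0 1).symm

lemma extend_sub_ne_zero {γ : Path a b} (hz : z ∉ Set.range γ) (s : ℝ) :
    γ.extend s - z ≠ 0 := fun h =>
  hz (γ.extend_range ▸ ⟨s, sub_eq_zero.1 h⟩)

lemma exp_logIncrement {γ : Path a b} (hz : z ∉ Set.range γ) :
    Complex.exp (logIncrement γ z) = (b - z) / (a - z) := by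
  obtain ⟨L, hL, hexp⟩ := exists_continuous_exp_eq (f := fun s => γ.extend s - z)
    (γ.continuous_extend.sub continuous_const) (extend_sub_ne_zero hz)
  rw [logIncrement_eq (r := 1) hL (by simpa using hexp), Complex.exp_sub, hexp, hexp]
  simp

lemma logIncrement_add_logIncrement_eq {γ : Path a b} {δ : Path c d}
    (h : Disjoint (Set.range γ) (Set.range δ)) :
    logIncrement γ c + logIncrement δ b = logIncrement γ d + logIncrement δ a := by
  have hne : ∀ x : ℝ × ℝ, γ.extend x.1 - δ.extend x.2 ≠ 0 := fun x hx =>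
    Set.disjoint_left.1 h (γ.extend_range ▸ Set.mem_range_self x.1)
      (sub_eq_zero.1 hx ▸ δ.extend_range ▸ Set.mem_range_self x.2)
  obtain ⟨L, hL, hexp⟩ := exists_continuous_exp_eq (by fun_prop) hne
  have hγc : logIncrement γ c = L (1, 0) - L (0, 0) :=
    logIncrement_eq (L := fun s => L (s, 0)) (r := 1) (by fun_prop) (by simp [hexp])
  have hγd : logIncrement γ d = L (1, 1) - L (0, 1) :=
    logIncrement_eq (L := fun s => L (s, 1)) (r := 1) (by fun_prop) (by simp [hexp])
  have hδa : logIncrement δ a = L (0, 1) - L (0, 0) :=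
    logIncrement_eq (L := fun s => L (0, s)) (r := -1) (by fun_prop) (by simp [hexp])
  have hδb : logIncrement δ b = L (1, 1) - L (1, 0) :=
    logIncrement_eq (L := fun s => L (1, s)) (r := -1) (by fun_prop) (by simp [hexp])
  rw [hγc, hγd, hδa, hδb]
  ring

end LogIncrement

section PentagonParity

/-- `1` if `u < v` and `-1` otherwise. -/
def orderSign {ι : Type*} [LinearOrder ι] (u v : ι) : ℤ := if u < v then 1 else -1

-- Sum over the fifteen pairs of disjoint edges of `K₅`: each `N i j k` occurs twice, whereas the
-- sign terms are `±2` for the five pairs of crossing diagonals of a convex pentagon and `0` for the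
-- other pairs, so the total is `2` modulo `4`.
lemma exists_nodup_two_mul_add_orderSign_ne_zero (N : Fin 5 → Fin 5 → Fin 5 → ℤ) :
    ∃ i j k l : Fin 5, [i, j, k, l].Nodup ∧
      2 * (N i j k - N i j l + N k l j - N k l i) +
        (orderSign j k - orderSign i k - orderSign j l + orderSign i l) ≠ 0 := by
  by_contra! h
  have h0123 := h 0 1 2 3 (by decide)
  have h0213 := h 0 2 1 3 (by decide)
  have h0312 := h 0 3 1 2 (by decide)
  have h0124 := h 0 1 2 4 (by decide)
  have h0214 := h 0 2 1 4 (by decide)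
  have h0412 := h 0 4 1 2 (by decide)
  have h0134 := h 0 1 3 4 (by decide)
  have h0314 := h 0 3 1 4 (by decide)
  have h0413 := h 0 4 1 3 (by decide)
  have h0234 := h 0 2 3 4 (by decide)
  have h0324 := h 0 3 2 4 (by decide)
  have h0423 := h 0 4 2 3 (by decide)
  have h1234 := h 1 2 3 4 (by decide)
  have h1324 := h 1 3 2 4 (by decide)
  have h1423 := h 1 4 2 3 (by decide)
  clear h
  simp only [orderSign, Fin.reduceLT, ↓reduceIte] at *
  omega

end PentagonParity

section CompleteGraphFive

lemma exists_log_sub_with_orderSign {ι : Type*} [LinearOrder ι] {p : ι → ℂ}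
    (hp : Function.Injective p) :
    ∃ a : ι → ι → ℂ, ∀ u v, u ≠ v → Complex.exp (a u v) = p v - p u ∧
      a v u - a u v = orderSign u v * (Real.pi * Complex.I) := by
  refine ⟨fun u v => if u < v then Complex.log (p v - p u)
    else Complex.log (p u - p v) + Real.pi * Complex.I, fun u v huv => ?_⟩
  have hsub : ∀ {u v}, u ≠ v → p v - p u ≠ 0 := fun h => sub_ne_zero.2 (hp.ne h.symm)
  rcases lt_or_gt_of_ne huv with h | h
  · simp [orderSign, h, h.not_gt, Complex.exp_log (hsub huv)]
  · simp [orderSign, h, h.not_gt, Complex.exp_add, Complex.exp_log (hsub huv.symm)]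

lemma exists_not_disjoint_range_path (p : Fin 5 → ℂ) (γ : ∀ i j, Path (p i) (p j)) :
    ∃ i j k l, i ≠ k ∧ i ≠ l ∧ j ≠ k ∧ j ≠ l ∧
      ¬ Disjoint (Set.range (γ i j)) (Set.range (γ k l)) := by
  by_contra! hdisj
  have hvertex : ∀ i j k, i ≠ k → j ≠ k → p k ∉ Set.range (γ i j) := fun i j k hik hjk h =>
    Set.disjoint_left.1 (hdisj i j k k hik hik hjk hjk) h (γ k k).source_mem_range
  have hp : Function.Injective p := fun i j hij => by
    by_contra hne
    exact hvertex i i j hne hne (hij ▸ (γ i i).source_mem_range)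
  obtain ⟨a, ha⟩ := exists_log_sub_with_orderSign hp
  have hint : ∀ i j k, i ≠ k → j ≠ k → ∃ n : ℤ,
      logIncrement (γ i j) (p k) = a k j - a k i + n * (2 * Real.pi * Complex.I) := by
    intro i j k hik hjk
    rw [← Complex.exp_eq_exp_iff_exists_int, exp_logIncrement (hvertex i j k hik hjk),
      Complex.exp_sub, (ha k j hjk.symm).1, (ha k i hik.symm).1]
  choose! N hN using hint
  obtain ⟨i, j, k, l, hnodup, hne⟩ := exists_nodup_two_mul_add_orderSign_ne_zero N
  simp only [List.nodup_cons, List.mem_cons, List.not_mem_nil, or_false, not_or] at hnodup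
  obtain ⟨⟨-, hik, hil⟩, ⟨hjk, hjl⟩, -⟩ := hnodup
  have hsquare := logIncrement_add_logIncrement_eq (hdisj i j k l hik hil hjk hjl)
  rw [hN i j k hik hjk, hN i j l hil hjl, hN k l j (Ne.symm hjk) (Ne.symm hjl),
    hN k l i (Ne.symm hik) (Ne.symm hil)] at hsquare
  refine hne (Int.cast_injective (α := ℂ) ?_)
  have hpi : (Real.pi * Complex.I : ℂ) ≠ 0 := by simp [Real.pi_ne_zero]
  refine mul_right_cancel₀ hpi ?_
  push_cast
  linear_combination hsquare - (ha j k hjk).2 + (ha i k hik).2 + (ha j l hjl).2 - (ha i l hil).2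

end CompleteGraphFive

/-! ### Connected vertex sets -/

section ConnectedOn

variable {V : Type*} {G : SimpleGraph V} {C D U : Finset V} {u v : V}

/-- The vertex set `C` is nonempty and induces a connected subgraph of `G`. -/
def ConnectedOn (G : SimpleGraph V) (C : Finset V) : Prop := (G.induce (C : Set V)).Connected

lemma ConnectedOn.nonempty (hC : ConnectedOn G C) : C.Nonempty :=
  Finset.nonempty_coe_sort.1 (SimpleGraph.Connected.nonempty hC)

lemma connectedOn_singleton (v : V) : ConnectedOn G {v} := by
  rw [ConnectedOn, Finset.coe_singleton, SimpleGraph.induce_singleton_eq_top]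
  exact SimpleGraph.connected_top

lemma ConnectedOn.union_of_adj [DecidableEq V] (hC : ConnectedOn G C) (hD : ConnectedOn G D)
    (hu : u ∈ C) (hv : v ∈ D) (huv : G.Adj u v) : ConnectedOn G (C ∪ D) := by
  rw [ConnectedOn, Finset.coe_union]
  exact SimpleGraph.connected_induce_union hC.preconnected hD.preconnected hu hv huv

lemma ConnectedOn.insert_of_adj [DecidableEq V] (hC : ConnectedOn G C) (hu : u ∈ C)
    (huv : G.Adj u v) : ConnectedOn G (insert v C) := by
  rw [Finset.insert_eq, Finset.union_comm]
  exact hC.union_of_adj (connectedOn_singleton v) hu (Finset.mem_singleton_self v) huv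

lemma ConnectedOn.induction {P : V → Prop} (hC : ConnectedOn G C) (hu : u ∈ C) (hPu : P u)
    (hstep : ∀ x ∈ C, ∀ y ∈ C, G.Adj x y → P x → P y) (hv : v ∈ C) : P v := by
  obtain ⟨p⟩ := hC.preconnected ⟨u, hu⟩ ⟨v, hv⟩
  by_contra hPv
  obtain ⟨d, -, hfst, hsnd⟩ := p.exists_boundary_dart {x | P x} hPu hPv
  exact hsnd (hstep _ d.fst.2 _ d.snd.2 d.adj hfst)

lemma ConnectedOn.exists_closed_superset (hC : ConnectedOn G C) (hCU : C ⊆ U) :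
    ∃ D ⊆ U, C ⊆ D ∧ ConnectedOn G D ∧ ∀ x ∈ D, ∀ y ∈ U, G.Adj x y → y ∈ D := by
  classical
  obtain ⟨D, hCD, hD⟩ := (U.powerset.filter (ConnectedOn G)).exists_le_maximal
    (Finset.mem_filter.2 ⟨Finset.mem_powerset.2 hCU, hC⟩)
  obtain ⟨hDU, hconn⟩ := Finset.mem_filter.1 hD.prop
  rw [Finset.mem_powerset] at hDU
  refine ⟨D, hDU, hCD, hconn, fun x hx y hy hxy => ?_⟩
  have hmem : insert y D ∈ U.powerset.filter (ConnectedOn G) := Finset.mem_filter.2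
    ⟨Finset.mem_powerset.2 (Finset.insert_subset hy hDU), hconn.insert_of_adj hx hxy⟩
  exact hD.le_of_ge hmem (Finset.subset_insert y D) (Finset.mem_insert_self y D)

end ConnectedOn

/-! ### Small connected sets or small separators -/

section SmallConnectedSet

lemma exists_card_sdiff_succ_mul_le {α : Type*} [DecidableEq α] {D : ℕ → Finset α}
    (hD : Monotone D) (t : ℕ) :
    ∃ s ≤ t, (D (s + 1) \ D s).card * (t + 1) ≤ (D (t + 1)).card := by
  have hsum : ∑ s ∈ Finset.range (t + 1), (D (s + 1) \ D s).card ≤ (D (t + 1)).card := by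
    have hcard : ∀ s, (D (s + 1) \ D s).card = (D (s + 1)).card - (D s).card := fun s =>
      Finset.card_sdiff_of_subset (hD s.le_succ)
    simp only [hcard]
    rw [Finset.sum_range_tsub (fun _ _ h => Finset.card_le_card (hD h))]
    exact Nat.sub_le _ _
  obtain ⟨s, hs, hle⟩ := Finset.exists_le_of_sum_le (s := Finset.range (t + 1))
    (f := fun s => (D (s + 1) \ D s).card * (t + 1)) (g := fun _ => (D (t + 1)).card)
    ⟨0, by simp⟩ (by
      rw [← Finset.sum_mul]
      simpa [mul_comm] using Nat.mul_le_mul_right (t + 1) hsum)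
  exact ⟨s, Nat.lt_succ_iff.1 (Finset.mem_range.1 hs), hle⟩

variable {V : Type*} {G : SimpleGraph V} {A : ℕ → Finset V} {B K : Finset V}
  {i k s : ℕ} {x y : V}

/-- `x` lies in a connected subset of `B` with at most `s` vertices that meets each of
`A 0, …, A i`. -/
def HasConnector (G : SimpleGraph V) (A : ℕ → Finset V) (B : Finset V) (s i : ℕ) (x : V) : Prop :=
  ∃ T ⊆ B, ConnectedOn G T ∧ x ∈ T ∧ T.card ≤ s ∧ ∀ j ≤ i, ∃ y ∈ T, y ∈ A j

lemma HasConnector.mono {s' : ℕ} (h : HasConnector G A B s i x) (hs : s ≤ s') :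
    HasConnector G A B s' i x := by
  obtain ⟨T, hTB, hT, hx, hcard, hmeet⟩ := h
  exact ⟨T, hTB, hT, hx, hcard.trans hs, hmeet⟩

lemma HasConnector.of_adj (h : HasConnector G A B s i x) (hxy : G.Adj x y)
    (hy : y ∈ B) : HasConnector G A B (s + 1) i y := by
  classical
  obtain ⟨T, hTB, hT, hx, hcard, hmeet⟩ := h
  refine ⟨insert y T, Finset.insert_subset hy hTB, hT.insert_of_adj hx hxy,
    Finset.mem_insert_self y T, (Finset.card_insert_le y T).trans (by lia), fun j hj => ?_⟩
  obtain ⟨z, hz, hzA⟩ := hmeet j hj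
  exact ⟨z, Finset.mem_insert_of_mem hz, hzA⟩

lemma HasConnector.succ (h : HasConnector G A B s i x) (hx : x ∈ A (i + 1)) :
    HasConnector G A B s (i + 1) x := by
  obtain ⟨T, hTB, hT, hxT, hcard, hmeet⟩ := h
  refine ⟨T, hTB, hT, hxT, hcard, fun j hj => ?_⟩
  rcases Nat.le_succ_iff.1 hj with hj | rfl
  exacts [hmeet j hj, ⟨x, hxT, hx⟩]

lemma hasConnector_one (hxB : x ∈ B) (hx : x ∈ A 0) : HasConnector G A B 1 0 x :=
  ⟨{x}, by simpa using hxB, connectedOn_singleton x, by simp, by simp, by simpa using hx⟩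

lemma ConnectedOn.exists_hasConnector (hK : ConnectedOn G K) (hKB : K ⊆ B)
    (hk : 0 < k) (hmeet : ∀ i ≤ k, ∃ y ∈ K, y ∈ A i)
    (hlayer : ∀ y ∈ K, ∀ i < k, HasConnector G A B (s + 1) i y → HasConnector G A B s i y) :
    ∃ x ∈ K, HasConnector G A B s k x := by
  suffices h : ∀ i ≤ k, ∃ x ∈ K, HasConnector G A B s i x from h k le_rfl
  intro i hi
  induction i with
  | zero =>
    obtain ⟨y, hyK, hyA⟩ := hmeet 0 hi
    exact ⟨y, hyK, hlayer y hyK 0 hk ((hasConnector_one (hKB hyK) hyA).mono (by lia))⟩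
  | succ i ih =>
    obtain ⟨x, hxK, hx⟩ := ih (by lia)
    obtain ⟨y, hyK, hyA⟩ := hmeet (i + 1) hi
    have hy : HasConnector G A B s i y := hK.induction hxK hx
      (fun a _ b hb hab ha => hlayer b hb i hi (ha.of_adj hab (hKB hb))) hyK
    exact ⟨y, hyK, hy.succ hyA⟩

lemma exists_connector_or_separator_of_seq (G : SimpleGraph V)
    (A : ℕ → Finset V) (B : Finset V) (hk : 0 < k) (t : ℕ) :
    (∃ T ⊆ B, ConnectedOn G T ∧ T.card ≤ t ∧ ∀ i ≤ k, ∃ y ∈ T, y ∈ A i) ∨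
      ∃ Z ⊆ B, Z.card * (t + 1) ≤ k * B.card ∧
        ∀ K ⊆ B, ConnectedOn G K → Disjoint K Z → ∃ i ≤ k, Disjoint K (A i) := by
  classical
  by_cases hconn : ∃ x, HasConnector G A B t k x
  · obtain ⟨x, T, hTB, hT, -, hcard, hmeet⟩ := hconn
    exact .inl ⟨T, hTB, hT, hcard, hmeet⟩
  right
  let D : ℕ → Finset (V × ℕ) := fun s =>
    (B ×ˢ Finset.range k).filter fun p => HasConnector G A B s p.2 p.1
  have hD : Monotone D := fun s s' hs p => by
    simp only [D, Finset.mem_filter]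
    exact fun hp => ⟨hp.1, hp.2.mono hs⟩
  obtain ⟨s, hst, hs⟩ := exists_card_sdiff_succ_mul_le hD t
  refine ⟨(D (s + 1) \ D s).image Prod.fst, ?_, ?_, fun K hKB hK hKZ => ?_⟩
  · simp only [D, Finset.image_subset_iff, Finset.mem_sdiff, Finset.mem_filter, Finset.mem_product]
    exact fun p hp => hp.1.1.1
  · calc _ ≤ (D (s + 1) \ D s).card * (t + 1) := Nat.mul_le_mul_right _ Finset.card_image_le
      _ ≤ (D (t + 1)).card := hs
      _ ≤ (B ×ˢ Finset.range k).card := Finset.card_filter_le _ _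
      _ = k * B.card := by rw [Finset.card_product, Finset.card_range, mul_comm]
  · by_contra! hmeet
    simp only [Finset.not_disjoint_iff] at hmeet
    obtain ⟨x, -, hx⟩ := hK.exists_hasConnector (s := s) hKB hk hmeet fun y hy i hi hyi => by
      by_contra hnot
      refine Finset.disjoint_left.1 hKZ hy (Finset.mem_image.2 ⟨(y, i), ?_, rfl⟩)
      simp [D, hKB hy, hi, hyi, hnot]
    exact hconn ⟨x, hx.mono hst⟩

lemma exists_connector_or_separator (G : SimpleGraph V)
    {𝒜 : Finset (Finset V)} (B : Finset V) (hk : 0 < k) (h𝒜 : 𝒜.card ≤ k + 1) (t : ℕ) :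
    (∃ T ⊆ B, ConnectedOn G T ∧ T.card ≤ t ∧ ∀ A ∈ 𝒜, ∃ y ∈ T, y ∈ A) ∨
      ∃ Z ⊆ B, Z.card * (t + 1) ≤ k * B.card ∧
        ∀ K ⊆ B, ConnectedOn G K → Disjoint K Z → ∃ A ∈ 𝒜, Disjoint K A := by
  -- Padding the list of the sets in `𝒜` with `B` imposes no condition on nonempty subsets of `B`.
  let seq : ℕ → Finset V := fun i => 𝒜.toList[i]?.getD B
  have hseq : ∀ A ∈ 𝒜, ∃ i ≤ k, seq i = A := fun A hA => by
    obtain ⟨i, hi, rfl⟩ := List.getElem_of_mem (Finset.mem_toList.2 hA)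
    exact ⟨i, by rw [Finset.length_toList] at hi; lia, by
      simp only [seq, List.getElem?_eq_getElem hi, Option.getD_some]⟩
  have hmem : ∀ i, seq i ∈ 𝒜 ∨ seq i = B := fun i => by
    rcases h : 𝒜.toList[i]? with _ | A
    · simp [seq, h]
    · exact .inl (by simpa [seq, h] using List.mem_of_getElem? h)
  rcases exists_connector_or_separator_of_seq G seq B hk t with
    ⟨T, hTB, hT, hcard, hmeet⟩ | ⟨Z, hZB, hcard, hsep⟩
  · refine .inl ⟨T, hTB, hT, hcard, fun A hA => ?_⟩
    obtain ⟨i, hi, rfl⟩ := hseq A hA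
    exact hmeet i hi
  · refine .inr ⟨Z, hZB, hcard, fun K hKB hK hKZ => ?_⟩
    obtain ⟨i, -, hdisj⟩ := hsep K hKB hK hKZ
    rcases hmem i with h | h
    · exact ⟨seq i, h, hdisj⟩
    · obtain ⟨x, hx⟩ := hK.nonempty
      exact absurd (h ▸ hKB hx) (Finset.disjoint_left.1 hdisj hx)

end SmallConnectedSet

/-! ### Separators in graphs without large clique minors -/

section CliqueMinor

variable {V : Type*} {G : SimpleGraph V} {𝒞 𝒟 : Finset (Finset V)} {T : Finset V}

/-- The members of `𝒞` are the branch sets of a complete minor of `G`: they are connected, pairwise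
disjoint, and any two of them are joined by an edge. -/
structure IsCliqueModel (G : SimpleGraph V) (𝒞 : Finset (Finset V)) : Prop where
  connectedOn : ∀ C ∈ 𝒞, ConnectedOn G C
  disjoint : ∀ C ∈ 𝒞, ∀ D ∈ 𝒞, C ≠ D → Disjoint C D
  adj : ∀ C ∈ 𝒞, ∀ D ∈ 𝒞, C ≠ D → ∃ x ∈ C, ∃ y ∈ D, G.Adj x y

/-- `G` has no complete minor on `h` vertices. -/
def CliqueMinorFree (G : SimpleGraph V) (h : ℕ) : Prop :=
  ∀ 𝒞, IsCliqueModel G 𝒞 → 𝒞.card < h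

lemma isCliqueModel_empty : IsCliqueModel G ∅ := ⟨by simp, by simp, by simp⟩

lemma IsCliqueModel.subset (h𝒞 : IsCliqueModel G 𝒞) (h𝒟 : 𝒟 ⊆ 𝒞) : IsCliqueModel G 𝒟 where
  connectedOn C hC := h𝒞.connectedOn C (h𝒟 hC)
  disjoint C hC D hD := h𝒞.disjoint C (h𝒟 hC) D (h𝒟 hD)
  adj C hC D hD := h𝒞.adj C (h𝒟 hC) D (h𝒟 hD)

lemma IsCliqueModel.insert [DecidableEq V] (h𝒞 : IsCliqueModel G 𝒞) (hT : ConnectedOn G T)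
    (hdisj : ∀ C ∈ 𝒞, Disjoint T C) (hadj : ∀ C ∈ 𝒞, ∃ x ∈ T, ∃ y ∈ C, G.Adj x y) :
    IsCliqueModel G (insert T 𝒞) where
  connectedOn := (Finset.forall_mem_insert _ _ _).2 ⟨hT, h𝒞.connectedOn⟩
  disjoint C hC D hD hCD := by
    rcases Finset.mem_insert.1 hC with rfl | hC𝒞 <;> rcases Finset.mem_insert.1 hD with rfl | hD𝒞
    exacts [absurd rfl hCD, hdisj D hD𝒞, (hdisj C hC𝒞).symm, h𝒞.disjoint C hC𝒞 D hD𝒞 hCD]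
  adj C hC D hD hCD := by
    rcases Finset.mem_insert.1 hC with rfl | hC𝒞 <;> rcases Finset.mem_insert.1 hD with rfl | hD𝒞
    · exact absurd rfl hCD
    · exact hadj D hD𝒞
    · obtain ⟨x, hx, y, hy, hxy⟩ := hadj C hC𝒞
      exact ⟨y, hy, x, hx, hxy.symm⟩
    · exact h𝒞.adj C hC𝒞 D hD𝒞 hCD

lemma IsCliqueModel.connectedOn_union [DecidableEq V] {C D : Finset V} (h𝒞 : IsCliqueModel G 𝒞)
    (hC : C ∈ 𝒞) (hD : D ∈ 𝒞) : ConnectedOn G (C ∪ D) := by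
  rcases eq_or_ne C D with rfl | hCD
  · simpa using h𝒞.connectedOn C hC
  · obtain ⟨x, hx, y, hy, hxy⟩ := h𝒞.adj C hC D hD hCD
    exact (h𝒞.connectedOn C hC).union_of_adj (h𝒞.connectedOn D hD) hx hy hxy

end CliqueMinor

section Separator

variable {V : Type*} [DecidableEq V] {G : SimpleGraph V} {W B B' S T Z K C : Finset V}
  {𝒞 𝒟 : Finset (Finset V)} {k r : ℕ} {y : V}

open Classical in
/-- The vertices of `W` outside `B` that have a neighbour in `B`. -/
noncomputable def outerBoundary (G : SimpleGraph V) (W B : Finset V) : Finset V :=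
  W.filter fun y => y ∉ B ∧ ∃ b ∈ B, G.Adj b y

lemma mem_outerBoundary :
    y ∈ outerBoundary G W B ↔ y ∈ W ∧ y ∉ B ∧ ∃ b ∈ B, G.Adj b y := by
  classical rw [outerBoundary, Finset.mem_filter]

lemma outerBoundary_subset : outerBoundary G W B ⊆ W := fun _ hy =>
  (mem_outerBoundary.1 hy).1

lemma mem_outerBoundary_of_subset (hB : B' ⊆ B) (hy : y ∈ outerBoundary G W B') (hyB : y ∉ B) :
    y ∈ outerBoundary G W B := by
  rw [mem_outerBoundary] at hy ⊢
  obtain ⟨hyW, -, b, hb, hby⟩ := hy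
  exact ⟨hyW, hyB, b, hB hb, hby⟩

lemma ConnectedOn.exists_absorbing_superset (hC : ConnectedOn G C) (hCB : Disjoint C B)
    (hKC : Disjoint K (outerBoundary G B C)) (W : Finset V) :
    ∃ D ⊆ C ∪ (B \ K), C ⊆ D ∧ ConnectedOn G D ∧ outerBoundary G B C ⊆ D ∧
      D ∩ outerBoundary G W (B \ D) ⊆ B ∩ outerBoundary G W K := by
  obtain ⟨D, hDsub, hCD, hD, hclosed⟩ :=
    hC.exists_closed_superset (Finset.subset_union_left (s₂ := B \ K))
  refine ⟨D, hDsub, hCD, hD, fun b hb => ?_, fun y hy => ?_⟩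
  · obtain ⟨hbB, -, x, hx, hxb⟩ := mem_outerBoundary.1 hb
    exact hclosed x (hCD hx) b (Finset.mem_union_right _
      (Finset.mem_sdiff.2 ⟨hbB, Finset.disjoint_right.1 hKC hb⟩)) hxb
  · obtain ⟨hyD, hy⟩ := Finset.mem_inter.1 hy
    obtain ⟨hyW, -, b, hb, hby⟩ := mem_outerBoundary.1 hy
    obtain ⟨hbB, hbD⟩ := Finset.mem_sdiff.1 hb
    have hbK : b ∈ K := by
      by_contra hbK
      exact hbD (hclosed y hyD b
        (Finset.mem_union_right _ (Finset.mem_sdiff.2 ⟨hbB, hbK⟩)) hby.symm)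
    have hyC : y ∉ C := fun hyC => Finset.disjoint_left.1 hKC hbK
      (mem_outerBoundary.2 ⟨hbB, Finset.disjoint_right.1 hCB hbB, y, hyC, hby.symm⟩)
    obtain ⟨hyB, hyK⟩ := Finset.mem_sdiff.1 ((Finset.mem_union.1 (hDsub hyD)).resolve_left hyC)
    exact Finset.mem_inter.2 ⟨hyB, mem_outerBoundary.2 ⟨hyW, hyK, b, hbK, hby⟩⟩

/-- Every connected subset of `W` avoiding `S ⊆ W` has at most half of the vertices of `W`. -/
def IsBalancedSeparator (G : SimpleGraph V) (W S : Finset V) : Prop :=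
  S ⊆ W ∧ ∀ K ⊆ W \ S, ConnectedOn G K → 2 * K.card ≤ W.card

lemma exists_large_component (hS : S ⊆ W) (hnot : ¬ IsBalancedSeparator G W S)
    (hBS : outerBoundary G W B ⊆ S) (hBW : B ⊆ W) (hB : W.card < 2 * B.card) :
    ∃ K ⊆ B \ S, ConnectedOn G K ∧ W.card < 2 * K.card ∧ outerBoundary G W K ⊆ S := by
  simp only [IsBalancedSeparator, hS, true_and, not_forall, not_le] at hnot
  obtain ⟨K₀, hK₀, hconn₀, hlarge₀⟩ := hnot
  obtain ⟨K, hKW, hK₀K, hconn, hclosed⟩ := hconn₀.exists_closed_superset hK₀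
  have hlarge : W.card < 2 * K.card :=
    hlarge₀.trans_le (Nat.mul_le_mul_left 2 (Finset.card_le_card hK₀K))
  have hKB : ∃ x ∈ K, x ∈ B := by
    by_contra! hdisj
    have hle := Finset.card_le_card (Finset.union_subset (hKW.trans Finset.sdiff_subset) hBW)
    rw [Finset.card_union_of_disjoint (Finset.disjoint_left.2 hdisj)] at hle
    lia
  obtain ⟨x, hxK, hxB⟩ := hKB
  refine ⟨K, fun y hy => Finset.mem_sdiff.2 ⟨?_, (Finset.mem_sdiff.1 (hKW hy)).2⟩, hconn, hlarge,
    fun y hy => ?_⟩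
  · refine hconn.induction hxK hxB (fun a _ b hb hab haB => ?_) hy
    by_contra hbB
    obtain ⟨hbW, hbS⟩ := Finset.mem_sdiff.1 (hKW hb)
    exact hbS (hBS (mem_outerBoundary.2 ⟨hbW, hbB, a, haB, hab⟩))
  · obtain ⟨hyW, hyK, b, hb, hby⟩ := mem_outerBoundary.1 hy
    by_contra hyS
    exact hyK (hclosed b hb y (Finset.mem_sdiff.2 ⟨hyW, hyS⟩) hby)

/-- The state of the Alon–Seymour–Thomas argument: more than half of `W` lies in a set `B` whose
outer boundary is covered by the branch sets of a complete minor disjoint from `B`, each branch set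
containing at most `r` of the boundary vertices. -/
structure CliqueEnclosure (G : SimpleGraph V) (W : Finset V) (r : ℕ) (𝒞 : Finset (Finset V))
    (B : Finset V) : Prop where
  subset : B ⊆ W
  card_lt : W.card < 2 * B.card
  isCliqueModel : IsCliqueModel G 𝒞
  disjoint : ∀ C ∈ 𝒞, Disjoint C B
  cover : ∀ y ∈ outerBoundary G W B, ∃ C ∈ 𝒞, y ∈ C
  card_inter_le : ∀ C ∈ 𝒞, (C ∩ outerBoundary G W B).card ≤ r

namespace CliqueEnclosure

lemma empty (hW : W.Nonempty) : CliqueEnclosure G W r ∅ W where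
  subset := subset_rfl
  card_lt := by have := hW.card_pos; lia
  isCliqueModel := isCliqueModel_empty
  disjoint := by simp
  cover y hy := absurd (mem_outerBoundary.1 hy).1 (mem_outerBoundary.1 hy).2.1
  card_inter_le := by simp

lemma card_outerBoundary_le (h : CliqueEnclosure G W r 𝒞 B) :
    (outerBoundary G W B).card ≤ 𝒞.card * r := by
  have hcover : outerBoundary G W B ⊆ 𝒞.biUnion fun C => C ∩ outerBoundary G W B := fun y hy => by
    obtain ⟨C, hC, hyC⟩ := h.cover y hy
    exact Finset.mem_biUnion.2 ⟨C, hC, Finset.mem_inter.2 ⟨hyC, hy⟩⟩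
  exact (Finset.card_le_card hcover).trans (Finset.card_biUnion_le_card_mul _ _ _ h.card_inter_le)

lemma exists_forall_adj (h : CliqueEnclosure G W r 𝒞 B) :
    ∃ 𝒟, CliqueEnclosure G W r 𝒟 B ∧ ∀ C ∈ 𝒟, (outerBoundary G B C).Nonempty := by
  classical
  let 𝒟 := 𝒞.filter fun C => (outerBoundary G B C).Nonempty
  have h𝒟 : 𝒟 ⊆ 𝒞 := Finset.filter_subset _ _
  refine ⟨𝒟, ⟨h.subset, h.card_lt, h.isCliqueModel.subset h𝒟, fun C hC => h.disjoint C (h𝒟 hC),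
    fun y hy => ?_, fun C hC => h.card_inter_le C (h𝒟 hC)⟩, fun C hC => (Finset.mem_filter.1 hC).2⟩
  obtain ⟨C, hC, hyC⟩ := h.cover y hy
  obtain ⟨-, -, b, hb, hby⟩ := mem_outerBoundary.1 hy
  exact ⟨C, Finset.mem_filter.2 ⟨hC, b, mem_outerBoundary.2
    ⟨hb, Finset.disjoint_right.1 (h.disjoint C hC) hb, y, hyC, hby.symm⟩⟩, hyC⟩

lemma replace (h : CliqueEnclosure G W r 𝒞 B) (h𝒟 : 𝒟 ⊆ 𝒞) (hB' : B' ⊆ B)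
    (hlarge : W.card < 2 * B'.card) (hT : ConnectedOn G T) (hT𝒟 : ∀ C ∈ 𝒟, Disjoint T C)
    (hadj : ∀ C ∈ 𝒟, ∃ x ∈ T, ∃ y ∈ C, G.Adj x y) (hTB' : Disjoint T B')
    (hcover : ∀ y ∈ outerBoundary G W B', y ∈ T ∨ ∃ C ∈ 𝒟, y ∈ C)
    (hcard : (T ∩ outerBoundary G W B').card ≤ r) :
    CliqueEnclosure G W r (insert T 𝒟) B' where
  subset := hB'.trans h.subset
  card_lt := hlarge
  isCliqueModel := (h.isCliqueModel.subset h𝒟).insert hT hT𝒟 hadj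
  disjoint := (Finset.forall_mem_insert _ _ _).2
    ⟨hTB', fun C hC => (h.disjoint C (h𝒟 hC)).mono_right hB'⟩
  cover := by simpa only [Finset.exists_mem_insert] using hcover
  card_inter_le := (Finset.forall_mem_insert _ _ _).2 ⟨hcard, fun C hC => by
    refine (Finset.card_le_card fun y hy => ?_).trans (h.card_inter_le C (h𝒟 hC))
    obtain ⟨hyC, hy⟩ := Finset.mem_inter.1 hy
    exact Finset.mem_inter.2 ⟨hyC, mem_outerBoundary_of_subset hB' hy
      (Finset.disjoint_left.1 (h.disjoint C (h𝒟 hC)) hyC)⟩⟩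

lemma insert_connector (h : CliqueEnclosure G W r 𝒞 B) (hT : ConnectedOn G T) (hTB : T ⊆ B)
    (hTr : T.card ≤ r) (hmeet : ∀ C ∈ 𝒞, ∃ y ∈ T, y ∈ outerBoundary G B C)
    (hK : K ⊆ B \ (outerBoundary G W B ∪ T)) (hlarge : W.card < 2 * K.card)
    (hKS : outerBoundary G W K ⊆ outerBoundary G W B ∪ T) :
    CliqueEnclosure G W r (insert T 𝒞) K := by
  have hKT : Disjoint T K := Finset.disjoint_right.2 fun y hy hyT =>
    (Finset.mem_sdiff.1 (hK hy)).2 (Finset.mem_union_right _ hyT)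
  refine h.replace subset_rfl (hK.trans Finset.sdiff_subset) hlarge hT
    (fun C hC => (h.disjoint C hC).symm.mono_left hTB) (fun C hC => ?_) hKT (fun y hy => ?_)
    ((Finset.card_le_card Finset.inter_subset_left).trans hTr)
  · obtain ⟨y, hyT, hy⟩ := hmeet C hC
    obtain ⟨-, -, c, hc, hcy⟩ := mem_outerBoundary.1 hy
    exact ⟨y, hyT, c, hc, hcy.symm⟩
  · exact (Finset.mem_union.1 (hKS hy)).symm.imp_right (h.cover y)

lemma exists_ssubset_of_disjoint (h : CliqueEnclosure G W r 𝒞 B) (hC : C ∈ 𝒞)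
    (hCB : (outerBoundary G B C).Nonempty) (hZ : Z.card ≤ r) (hK : K ⊆ B)
    (hlarge : W.card < 2 * K.card) (hKS : outerBoundary G W K ⊆ outerBoundary G W B ∪ Z)
    (hKC : Disjoint K (outerBoundary G B C)) :
    ∃ 𝒟, ∃ B' ⊂ B, CliqueEnclosure G W r 𝒟 B' := by
  obtain ⟨D, hDsub, hCD, hD, hbdry, hinter⟩ :=
    (h.isCliqueModel.connectedOn C hC).exists_absorbing_superset (h.disjoint C hC) hKC W
  have hDmem : ∀ x ∈ D, x ∈ C ∨ x ∈ B ∧ x ∉ K := by simpa [Finset.subset_iff] using hDsub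
  have hKD : K ⊆ B \ D := fun x hx => Finset.mem_sdiff.2 ⟨hK hx, fun hxD => (hDmem x hxD).elim
    (fun hxC => Finset.disjoint_left.1 (h.disjoint C hC) hxC (hK hx)) fun hxB => hxB.2 hx⟩
  refine ⟨insert D (𝒞.erase C), B \ D, ?_, h.replace (𝒞.erase_subset C) Finset.sdiff_subset ?_ hD
    (fun C' hC' => ?_) (fun C' hC' => ?_) Finset.disjoint_sdiff (fun y hy => ?_)
    ((Finset.card_le_card fun y hy => ?_).trans hZ)⟩
  · obtain ⟨b, hb⟩ := hCB
    exact (Finset.ssubset_iff_of_subset Finset.sdiff_subset).2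
      ⟨b, outerBoundary_subset hb, fun hbD => (Finset.mem_sdiff.1 hbD).2 (hbdry hb)⟩
  · exact hlarge.trans_le (Nat.mul_le_mul_left 2 (Finset.card_le_card hKD))
  · obtain ⟨hne, hC'⟩ := Finset.mem_erase.1 hC'
    exact Finset.disjoint_left.2 fun x hxD hxC' => (hDmem x hxD).elim
      (fun hxC => Finset.disjoint_left.1 (h.isCliqueModel.disjoint C hC C' hC' hne.symm) hxC hxC')
      (fun hxB => Finset.disjoint_left.1 (h.disjoint C' hC') hxC' hxB.1)
  · obtain ⟨hne, hC'⟩ := Finset.mem_erase.1 hC'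
    obtain ⟨x, hx, y, hy, hxy⟩ := h.isCliqueModel.adj C hC C' hC' hne.symm
    exact ⟨x, hCD hx, y, hy, hxy⟩
  · refine or_iff_not_imp_left.2 fun hyD => ?_
    have hyB : y ∉ B := fun hyB => (mem_outerBoundary.1 hy).2.1 (Finset.mem_sdiff.2 ⟨hyB, hyD⟩)
    obtain ⟨C', hC', hyC'⟩ := h.cover y (mem_outerBoundary_of_subset Finset.sdiff_subset hy hyB)
    exact ⟨C', Finset.mem_erase.2 ⟨fun hne => hyD (hCD (hne ▸ hyC')), hC'⟩, hyC'⟩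
  · obtain ⟨hyB, hyK⟩ := Finset.mem_inter.1 (hinter hy)
    exact (Finset.mem_union.1 (hKS hyK)).resolve_left fun hy => (mem_outerBoundary.1 hy).2.1 hyB

lemma exists_isBalancedSeparator_or_ssubset (h : CliqueEnclosure G W r 𝒞 B)
    (hadj : ∀ C ∈ 𝒞, (outerBoundary G B C).Nonempty) (hk : 0 < k) (h𝒞 : 𝒞.card ≤ k + 1)
    (hr : k * B.card < (r + 1) ^ 2) :
    (∃ S, IsBalancedSeparator G W S ∧ S.card ≤ (k + 2) * r) ∨
      ∃ 𝒟, ∃ B' ⊂ B, CliqueEnclosure G W r 𝒟 B' := by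
  have hcard : ∀ X : Finset V, X.card ≤ r → (outerBoundary G W B ∪ X).card ≤ (k + 2) * r :=
    fun X hX => (Finset.card_union_le _ _).trans <| by
      linarith [h.card_outerBoundary_le, Nat.mul_le_mul_right r h𝒞]
  have hcomponent : ∀ X ⊆ B, ¬ IsBalancedSeparator G W (outerBoundary G W B ∪ X) →
      ∃ K ⊆ B \ (outerBoundary G W B ∪ X), ConnectedOn G K ∧ W.card < 2 * K.card ∧
        outerBoundary G W K ⊆ outerBoundary G W B ∪ X := fun X hX hnot =>
    exists_large_component (Finset.union_subset outerBoundary_subset (hX.trans h.subset)) hnot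
      Finset.subset_union_left h.subset h.card_lt
  rw [or_iff_not_imp_left]
  intro hno
  rcases exists_connector_or_separator G (𝒜 := 𝒞.image (outerBoundary G B)) B hk
    (Finset.card_image_le.trans h𝒞) r with ⟨T, hTB, hT, hTr, hmeet⟩ | ⟨Z, hZB, hZ, hsep⟩
  · obtain ⟨K, hK, -, hlarge, hKS⟩ := hcomponent T hTB fun hbal => hno ⟨_, hbal, hcard T hTr⟩
    obtain ⟨x, hx⟩ := hT.nonempty
    refine ⟨insert T 𝒞, K, ?_, h.insert_connector hT hTB hTr (by simpa using hmeet) hK hlarge hKS⟩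
    exact (Finset.ssubset_iff_of_subset (hK.trans Finset.sdiff_subset)).2 ⟨x, hTB hx, fun hxK =>
      (Finset.mem_sdiff.1 (hK hxK)).2 (Finset.mem_union_right _ hx)⟩
  · have hZr : Z.card ≤ r := by
      by_contra! hlt
      nlinarith
    obtain ⟨K, hK, hKconn, hlarge, hKS⟩ :=
      hcomponent Z hZB fun hbal => hno ⟨_, hbal, hcard Z hZr⟩
    have hKB : K ⊆ B := hK.trans Finset.sdiff_subset
    have hKZ : Disjoint K Z := Finset.disjoint_left.2 fun x hx hxZ =>
      (Finset.mem_sdiff.1 (hK hx)).2 (Finset.mem_union_right _ hxZ)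
    obtain ⟨_, hA, hdisj⟩ := hsep K hKB hKconn hKZ
    obtain ⟨C, hC, rfl⟩ := Finset.mem_image.1 hA
    exact h.exists_ssubset_of_disjoint hC (hadj C hC) hZr hKB hlarge hKS hdisj

end CliqueEnclosure

theorem exists_isBalancedSeparator_of_cliqueMinorFree (hk : 0 < k)
    (hG : CliqueMinorFree G (k + 2)) (W : Finset V) :
    ∃ S, IsBalancedSeparator G W S ∧ S.card ≤ (k + 2) * Nat.sqrt (k * W.card) := by
  rcases W.eq_empty_or_nonempty with rfl | hW
  · exact ⟨∅, ⟨subset_rfl, fun K hK _ => by simp [Finset.subset_empty.1 hK]⟩, by simp⟩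
  set r := Nat.sqrt (k * W.card)
  classical
  obtain ⟨B, ⟨𝒞, h⟩, hmin⟩ := exists_minimal_of_wellFoundedLT
    (fun B => ∃ 𝒞, CliqueEnclosure G W r 𝒞 B) ⟨W, ∅, .empty hW⟩
  obtain ⟨𝒟, h, hadj⟩ := h.exists_forall_adj
  have hlt : k * B.card < (r + 1) ^ 2 := by
    rw [pow_two]
    exact (Nat.mul_le_mul_left k (Finset.card_le_card h.subset)).trans_lt (Nat.lt_succ_sqrt _)
  refine (h.exists_isBalancedSeparator_or_ssubset hadj hk
    (Nat.lt_succ_iff.1 (hG 𝒟 h.isCliqueModel)) hlt).resolve_right ?_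
  rintro ⟨𝒟', B', hB', h'⟩
  exact hB'.not_subset (hmin ⟨𝒟', h'⟩ hB'.subset)

end Separator

/-! ### Cutwidth of weighted graphs -/

section CrossWeight

variable {V : Type*} {m : V → V → ℝ} {Δ : ℝ} {A B C L S W : Finset V}

/-- The total weight `∑ m u v` of the pairs `(u, v)` in `A × B`. -/
def crossWeight (m : V → V → ℝ) (A B : Finset V) : ℝ := ∑ u ∈ A, ∑ v ∈ B, m u v

lemma crossWeight_comm (hsymm : ∀ u v, m u v = m v u) (A B : Finset V) :
    crossWeight m A B = crossWeight m B A := by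
  rw [crossWeight, Finset.sum_comm]
  exact Finset.sum_congr rfl fun v _ => Finset.sum_congr rfl fun u _ => hsymm u v

lemma crossWeight_nonneg (hm : ∀ u v, 0 ≤ m u v) (A B : Finset V) : 0 ≤ crossWeight m A B :=
  Finset.sum_nonneg fun u _ => Finset.sum_nonneg fun v _ => hm u v

lemma crossWeight_eq_zero (h : ∀ u ∈ A, ∀ v ∈ B, m u v = 0) : crossWeight m A B = 0 :=
  Finset.sum_eq_zero fun u hu => Finset.sum_eq_zero fun v hv => h u hu v hv

lemma crossWeight_le_mul_card (hdeg : ∀ u (W : Finset V), ∑ v ∈ W, m u v ≤ Δ) (A B : Finset V) :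
    crossWeight m A B ≤ Δ * A.card := by
  rw [mul_comm, ← nsmul_eq_mul]
  exact Finset.sum_le_card_nsmul _ _ _ fun u _ => hdeg u B

variable [DecidableEq V]

lemma crossWeight_union_left (h : Disjoint A B) (C : Finset V) :
    crossWeight m (A ∪ B) C = crossWeight m A C + crossWeight m B C :=
  Finset.sum_union h

lemma crossWeight_union_right (h : Disjoint B C) (A : Finset V) :
    crossWeight m A (B ∪ C) = crossWeight m A B + crossWeight m A C := by
  simp only [crossWeight, Finset.sum_union h, Finset.sum_add_distrib]

lemma two_mul_crossWeight_sdiff_le (hm : ∀ u v, 0 ≤ m u v) (hsymm : ∀ u v, m u v = m v u)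
    (hA : A ⊆ W) : 2 * crossWeight m A (W \ A) ≤ crossWeight m W W := by
  have hsplit : crossWeight m W W = crossWeight m A A + crossWeight m A (W \ A) +
      (crossWeight m (W \ A) A + crossWeight m (W \ A) (W \ A)) := by
    rw [← crossWeight_union_right Finset.disjoint_sdiff,
      ← crossWeight_union_right Finset.disjoint_sdiff,
      ← crossWeight_union_left Finset.disjoint_sdiff, Finset.union_sdiff_of_subset hA]
  linarith [crossWeight_comm hsymm A (W \ A), crossWeight_nonneg hm A A,
    crossWeight_nonneg hm (W \ A) (W \ A)]

lemma crossWeight_union_sdiff (hLS : Disjoint L S) (hA : A ⊆ L ∪ S) :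
    crossWeight m A ((L ∪ S) \ A) =
      crossWeight m (A ∩ L) (L \ A) + crossWeight m (A ∩ S) (L \ A) +
        (crossWeight m (A ∩ L) (S \ A) + crossWeight m (A ∩ S) (S \ A)) := by
  have hinter : Disjoint (A ∩ L) (A ∩ S) :=
    hLS.mono Finset.inter_subset_right Finset.inter_subset_right
  have hsdiff : Disjoint (L \ A) (S \ A) := hLS.mono Finset.sdiff_subset Finset.sdiff_subset
  rw [← crossWeight_union_left hinter, ← crossWeight_union_left hinter,
    ← crossWeight_union_right hsdiff, ← Finset.inter_union_distrib_left,
    ← Finset.union_sdiff_distrib, Finset.inter_eq_left.2 hA]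

end CrossWeight

section Median

variable {V : Type*} {m : V → V → ℝ} {Δ : ℝ} {A L S : Finset V} {f k : V → ℕ}

lemma exists_weighted_median {a : V → ℝ} (ha : ∀ v, 0 ≤ a v) (L : Finset V) (f : V → ℕ) :
    ∃ k, 2 * ∑ v ∈ L with f v < k, a v ≤ ∑ v ∈ L, a v ∧
      2 * ∑ v ∈ L with k < f v, a v ≤ ∑ v ∈ L, a v := by
  have hex : ∃ k, ∑ v ∈ L, a v ≤ 2 * ∑ v ∈ L with f v ≤ k, a v := by
    refine ⟨L.sup f, ?_⟩
    rw [Finset.filter_true_of_mem fun v hv => Finset.le_sup hv]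
    linarith [Finset.sum_nonneg fun v (_ : v ∈ L) => ha v]
  refine ⟨Nat.find hex, ?_, ?_⟩
  · rcases h : Nat.find hex with _ | k
    · simpa using Finset.sum_nonneg fun v _ => ha v
    · have hlt := Nat.find_min hex (m := k) (by lia)
      simpa only [Nat.lt_succ_iff] using (not_le.1 hlt).le
  · have hsplit := Finset.sum_filter_add_sum_filter_not L (f · ≤ Nat.find hex) a
    simp only [not_le] at hsplit
    linarith [Nat.find_spec hex]

lemma sum_sum_filter_eq_le (hm : ∀ u v, 0 ≤ m u v) (hsymm : ∀ u v, m u v = m v u)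
    (hdeg : ∀ u (W : Finset V), ∑ v ∈ W, m u v ≤ Δ) (hΔ : 0 ≤ Δ)
    (hf : Set.InjOn f L) (hk : ∀ s ∈ S, ∀ v ∈ L, k s ≤ f v) :
    ∑ s ∈ S, ∑ v ∈ L with f v = k s, m s v ≤ Δ := by
  rcases L.eq_empty_or_nonempty with rfl | hL
  · simpa using hΔ
  obtain ⟨v₀, hv₀, hmin⟩ := L.exists_min_image f hL
  have hsub : ∀ s ∈ S, L.filter (f · = k s) ⊆ {v₀} := fun s hs v hv => by
    obtain ⟨hvL, hfv⟩ := Finset.mem_filter.1 hv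
    exact Finset.mem_singleton.2 (hf hvL hv₀ (le_antisymm (hfv ▸ hk s hs v₀ hv₀) (hmin v hvL)))
  calc ∑ s ∈ S, ∑ v ∈ L with f v = k s, m s v ≤ ∑ s ∈ S, ∑ v ∈ {v₀}, m s v :=
        Finset.sum_le_sum fun s hs =>
          Finset.sum_le_sum_of_subset_of_nonneg (hsub s hs) fun v _ _ => hm s v
    _ = ∑ s ∈ S, m v₀ s := by simp only [Finset.sum_singleton, hsymm v₀]
    _ ≤ Δ := hdeg v₀ S

lemma crossWeight_add_crossWeight_le_of_median [DecidableEq V] (hm : ∀ u v, 0 ≤ m u v)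
    (hsymm : ∀ u v, m u v = m v u) (hdeg : ∀ u (W : Finset V), ∑ v ∈ W, m u v ≤ Δ) (hΔ : 0 ≤ Δ)
    (hf : Set.InjOn f L)
    (hlt : ∀ s, 2 * ∑ v ∈ L with f v < k s, m s v ≤ ∑ v ∈ L, m s v)
    (hgt : ∀ s, 2 * ∑ v ∈ L with k s < f v, m s v ≤ ∑ v ∈ L, m s v)
    (hin : ∀ s ∈ A ∩ S, ∀ v ∈ L \ A, k s ≤ f v) (hout : ∀ s ∈ S \ A, ∀ v ∈ A ∩ L, f v < k s) :
    crossWeight m (A ∩ S) (L \ A) + crossWeight m (A ∩ L) (S \ A) ≤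
      crossWeight m S L / 2 + Δ := by
  have hle_in : ∀ s ∈ A ∩ S, ∑ v ∈ L \ A, m s v ≤
      (∑ v ∈ L, m s v) / 2 + ∑ v ∈ L \ A with f v = k s, m s v := fun s hs => by
    have hsplit := Finset.sum_filter_add_sum_filter_not (L \ A) (f · = k s) (m s)
    have hsub : ∑ v ∈ L \ A with ¬ f v = k s, m s v ≤ ∑ v ∈ L with k s < f v, m s v := by
      refine Finset.sum_le_sum_of_subset_of_nonneg (fun v hv => ?_) fun v _ _ => hm s v
      obtain ⟨hvLA, hne⟩ := Finset.mem_filter.1 hv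
      exact Finset.mem_filter.2
        ⟨(Finset.mem_sdiff.1 hvLA).1, lt_of_le_of_ne (hin s hs v hvLA) (Ne.symm hne)⟩
    linarith [hgt s]
  have hle_out : ∀ s ∈ S \ A, ∑ v ∈ A ∩ L, m s v ≤ (∑ v ∈ L, m s v) / 2 := fun s hs => by
    have hsub : ∑ v ∈ A ∩ L, m s v ≤ ∑ v ∈ L with f v < k s, m s v :=
      Finset.sum_le_sum_of_subset_of_nonneg (fun v hv => Finset.mem_filter.2
        ⟨(Finset.mem_inter.1 hv).2, hout s hs v hv⟩) fun v _ _ => hm s v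
    linarith [hlt s]
  have hsum_in := Finset.sum_le_sum hle_in
  have hsum_out := Finset.sum_le_sum hle_out
  have hexcess := sum_sum_filter_eq_le hm hsymm hdeg hΔ
    (hf.mono (Finset.coe_subset.2 Finset.sdiff_subset)) hin
  have hS : crossWeight m S L = crossWeight m (A ∩ S) L + crossWeight m (S \ A) L := by
    rw [← crossWeight_union_left (Finset.disjoint_sdiff.mono_left Finset.inter_subset_left),
      Finset.inter_comm, Finset.union_comm, Finset.sdiff_union_inter]
  rw [Finset.sum_add_distrib, ← Finset.sum_div] at hsum_in
  rw [← Finset.sum_div] at hsum_out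
  rw [crossWeight_comm hsymm (A ∩ L), hS]
  simp only [crossWeight]
  linarith

end Median

section Cutwidth

variable {V : Type*} [DecidableEq V] {m : V → V → ℝ} {Δ w w' : ℝ} {A L S U W : Finset V}

/-- `A` consists of the vertices of `W` up to some point in the order given by the key `F`. -/
def IsInitialSegment {α : Type*} [LT α] (F : V → α) (W A : Finset V) : Prop :=
  A ⊆ W ∧ ∀ u ∈ A, ∀ v ∈ W \ A, F u < F v

lemma IsInitialSegment.inter {α β : Type*} [LT α] [LT β] {F : V → α} {f : V → β}
    (h : IsInitialSegment F W A) (hL : L ⊆ W) (hFf : ∀ u ∈ L, ∀ v ∈ L, F u < F v → f u < f v) :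
    IsInitialSegment f L (A ∩ L) := by
  refine ⟨Finset.inter_subset_right, fun u hu v hv => ?_⟩
  rw [Finset.sdiff_inter_self_right] at hv
  exact hFf u (Finset.mem_inter.1 hu).2 v (Finset.mem_sdiff.1 hv).1
    (h.2 u (Finset.mem_inter.1 hu).1 v (Finset.sdiff_subset_sdiff hL subset_rfl hv))

/-- The vertices of `W` can be ordered so that the weight of the pairs separated by any initial
segment is at most `w`. The order is given by a key `f` that is injective on `W`. -/
def CutwidthLE (m : V → V → ℝ) (W : Finset V) (w : ℝ) : Prop :=
  ∃ f : V → ℕ, Set.InjOn f W ∧ ∀ A, IsInitialSegment f W A → crossWeight m A (W \ A) ≤ w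

lemma CutwidthLE.mono (h : CutwidthLE m W w) (hw : w ≤ w') : CutwidthLE m W w' := by
  obtain ⟨f, hf, hcut⟩ := h
  exact ⟨f, hf, fun A hA => (hcut A hA).trans hw⟩

lemma CutwidthLE.nonneg (h : CutwidthLE m W w) : 0 ≤ w := by
  obtain ⟨f, -, hcut⟩ := h
  simpa [crossWeight] using hcut ∅ ⟨Finset.empty_subset W, by simp⟩

lemma cutwidthLE_of_key {α : Type*} [LinearOrder α] (F : V → α) (hF : Set.InjOn F W)
    (hcut : ∀ A, IsInitialSegment F W A → crossWeight m A (W \ A) ≤ w) : CutwidthLE m W w := by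
  have hrank : ∀ u ∈ W, ∀ v, F u < F v →
      (W.filter (F · < F u)).card < (W.filter (F · < F v)).card := fun u hu v huv =>
    Finset.card_lt_card <| (Finset.ssubset_iff_of_subset
      (Finset.monotone_filter_right W fun x _ hx => hx.trans huv)).2
      ⟨u, Finset.mem_filter.2 ⟨hu, huv⟩, by simp⟩
  refine ⟨fun v => (W.filter (F · < F v)).card, fun u hu v hv huv => hF hu hv ?_,
    fun A hA => hcut A ⟨hA.1, fun u hu v hv => ?_⟩⟩
  · by_contra hne
    rcases lt_or_gt_of_ne hne with h | h
    exacts [(hrank u hu v h).ne huv, (hrank v hv u h).ne huv.symm]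
  · by_contra! hle
    rcases hle.lt_or_eq with h | h
    · exact (hrank v (Finset.mem_sdiff.1 hv).1 u h).not_gt (hA.2 u hu v hv)
    · exact absurd (hA.2 u hu v hv) (by simp [h])

lemma cutwidthLE_half_mul_card (hm : ∀ u v, 0 ≤ m u v) (hsymm : ∀ u v, m u v = m v u)
    (hdeg : ∀ u (W : Finset V), ∑ v ∈ W, m u v ≤ Δ) (W : Finset V) :
    CutwidthLE m W (Δ * W.card / 2) := by
  refine ⟨W.toList.idxOf, fun u hu v _ huv => ?_, fun A hA => ?_⟩
  · exact (List.idxOf_inj (Finset.mem_toList.2 hu)).1 huv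
  · linarith [two_mul_crossWeight_sdiff_le hm hsymm hA.1, crossWeight_le_mul_card hdeg W W]

lemma CutwidthLE.union (hL : CutwidthLE m L w) (hS : CutwidthLE m S w) (hLS : Disjoint L S)
    (hzero : ∀ u ∈ L, ∀ v ∈ S, m u v = 0 ∧ m v u = 0) : CutwidthLE m (L ∪ S) w := by
  obtain ⟨f, hf, hfcut⟩ := hL
  obtain ⟨g, hg, hgcut⟩ := hS
  let F : V → ℕ ×ₗ ℕ := fun v => if v ∈ L then toLex (0, f v) else toLex (1, g v)
  have hFL : ∀ v ∈ L, F v = toLex (0, f v) := fun v hv => if_pos hv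
  have hFS : ∀ v ∈ S, F v = toLex (1, g v) := fun v hv => if_neg (Finset.disjoint_right.1 hLS hv)
  refine cutwidthLE_of_key F ?_ fun A hA => ?_
  · intro u hu v hv huv
    rcases Finset.mem_union.1 hu with hu | hu <;> rcases Finset.mem_union.1 hv with hv | hv
    · exact hf hu hv (by simpa [hFL u hu, hFL v hv] using huv)
    · simp [hFL u hu, hFS v hv] at huv
    · simp [hFS u hu, hFL v hv] at huv
    · exact hg hu hv (by simpa [hFS u hu, hFS v hv] using huv)
  · have hAL := hfcut _ (hA.inter (f := f) Finset.subset_union_left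
      (fun u hu v hv huv => by simpa [hFL u hu, hFL v hv, Prod.Lex.toLex_lt_toLex] using huv))
    have hAS := hgcut _ (hA.inter (f := g) Finset.subset_union_right
      (fun u hu v hv huv => by simpa [hFS u hu, hFS v hv, Prod.Lex.toLex_lt_toLex] using huv))
    rw [Finset.sdiff_inter_self_right] at hAL hAS
    have hLS0 : crossWeight m (A ∩ L) (S \ A) = 0 := crossWeight_eq_zero fun u hu v hv =>
      (hzero u (Finset.mem_inter.1 hu).2 v (Finset.mem_sdiff.1 hv).1).1
    have hSL0 : crossWeight m (A ∩ S) (L \ A) = 0 := crossWeight_eq_zero fun u hu v hv =>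
      (hzero v (Finset.mem_sdiff.1 hv).1 u (Finset.mem_inter.1 hu).2).2
    rw [crossWeight_union_sdiff hLS hA.1, hLS0, hSL0]
    rcases (A ∩ S).eq_empty_or_nonempty with hAS0 | ⟨s, hs⟩
    · simpa [hAS0, crossWeight] using hAL
    · obtain ⟨hsA, hsS⟩ := Finset.mem_inter.1 hs
      have hLA : L \ A = ∅ := Finset.eq_empty_of_forall_notMem fun v hv => by
        have hlt := hA.2 s hsA v (Finset.sdiff_subset_sdiff Finset.subset_union_left subset_rfl hv)
        simp [hFS s hsS, hFL v (Finset.mem_sdiff.1 hv).1, Prod.Lex.toLex_lt_toLex] at hlt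
      simpa [hLA, crossWeight] using hAS

/-- The graph whose edges are the pairs of distinct vertices of nonzero weight. -/
def supportGraph (m : V → V → ℝ) : SimpleGraph V := SimpleGraph.fromRel fun u v => m u v ≠ 0

lemma cutwidthLE_of_connectedOn (hw : 0 ≤ w)
    (hK : ∀ K ⊆ U, ConnectedOn (supportGraph m) K → CutwidthLE m K w) : CutwidthLE m U w := by
  induction U using Finset.strongInduction with
  | H U ih =>
    rcases U.eq_empty_or_nonempty with rfl | ⟨v, hv⟩
    · exact ⟨0, by simp, fun A _ => by simpa [crossWeight] using hw⟩
    obtain ⟨K, hKU, hvK, hconn, hclosed⟩ :=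
      (connectedOn_singleton (G := supportGraph m) v).exists_closed_superset
        (Finset.singleton_subset_iff.2 hv)
    have hrest : CutwidthLE m (U \ K) w := ih (U \ K)
      ((Finset.ssubset_iff_of_subset Finset.sdiff_subset).2
        ⟨v, hv, by simp [Finset.singleton_subset_iff.1 hvK]⟩)
      fun K' hK' => hK K' (hK'.trans Finset.sdiff_subset)
    rw [← Finset.union_sdiff_of_subset hKU]
    refine (hK K hKU hconn).union hrest Finset.disjoint_sdiff fun x hx y hy => ?_
    obtain ⟨hyU, hyK⟩ := Finset.mem_sdiff.1 hy
    have hnadj := mt (hclosed x hx y hyU) hyK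
    simpa [supportGraph, ne_of_mem_of_not_mem hx hyK] using hnadj

lemma exists_key_interleave {f : V → ℕ} (k : V → ℕ) (hf : Set.InjOn f L) (hLS : Disjoint L S) :
    ∃ F : V → ℕ ×ₗ ℕ, Set.InjOn F ↑(L ∪ S) ∧ (∀ u ∈ L, ∀ v ∈ L, F u < F v → f u < f v) ∧
      (∀ s ∈ S, ∀ v ∈ L, F s < F v → k s ≤ f v) ∧ ∀ s ∈ S, ∀ v ∈ L, F v < F s → f v < k s := by
  let F : V → ℕ ×ₗ ℕ := fun v =>
    if v ∈ S then toLex (2 * k v, S.toList.idxOf v) else toLex (2 * f v + 1, 0)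
  have hFS : ∀ s ∈ S, F s = toLex (2 * k s, S.toList.idxOf s) := fun s hs => if_pos hs
  have hFL : ∀ v ∈ L, F v = toLex (2 * f v + 1, 0) := fun v hv =>
    if_neg (Finset.disjoint_left.1 hLS hv)
  refine ⟨F, fun u hu v hv huv => ?_, fun u hu v hv huv => ?_, fun s hs v hv hsv => ?_,
    fun s hs v hv hvs => ?_⟩
  · rcases Finset.mem_union.1 hu with hu | hu <;> rcases Finset.mem_union.1 hv with hv | hv
    · exact hf hu hv (by simpa [hFL u hu, hFL v hv] using huv)
    · simp only [hFL u hu, hFS v hv, EmbeddingLike.apply_eq_iff_eq, Prod.mk.injEq] at huv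
      lia
    · simp only [hFS u hu, hFL v hv, EmbeddingLike.apply_eq_iff_eq, Prod.mk.injEq] at huv
      lia
    · simp only [hFS u hu, hFS v hv, EmbeddingLike.apply_eq_iff_eq, Prod.mk.injEq] at huv
      exact (List.idxOf_inj (Finset.mem_toList.2 hu)).1 huv.2
  · simpa [hFL u hu, hFL v hv, Prod.Lex.toLex_lt_toLex] using huv
  · rw [hFS s hs, hFL v hv, Prod.Lex.toLex_lt_toLex] at hsv
    lia
  · rw [hFS s hs, hFL v hv, Prod.Lex.toLex_lt_toLex] at hvs
    lia

lemma CutwidthLE.union_of_degree_le (hm : ∀ u v, 0 ≤ m u v) (hsymm : ∀ u v, m u v = m v u)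
    (hdeg : ∀ u (W : Finset V), ∑ v ∈ W, m u v ≤ Δ) (hΔ : 0 ≤ Δ) (hL : CutwidthLE m L w)
    (hLS : Disjoint L S) : CutwidthLE m (L ∪ S) (w + Δ * S.card / 2 + Δ) := by
  obtain ⟨f, hf, hfcut⟩ := hL
  choose k hlt hgt using fun s => exists_weighted_median (hm s) L f
  obtain ⟨F, hF, hFL, hFin, hFout⟩ := exists_key_interleave k hf hLS
  refine cutwidthLE_of_key F hF fun A hA => ?_
  have hin : ∀ s ∈ A ∩ S, ∀ v ∈ L \ A, k s ≤ f v := fun s hs v hv =>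
    hFin s (Finset.mem_inter.1 hs).2 v (Finset.mem_sdiff.1 hv).1
      (hA.2 s (Finset.mem_inter.1 hs).1 v
        (Finset.sdiff_subset_sdiff Finset.subset_union_left subset_rfl hv))
  have hout : ∀ s ∈ S \ A, ∀ v ∈ A ∩ L, f v < k s := fun s hs v hv =>
    hFout s (Finset.mem_sdiff.1 hs).1 v (Finset.mem_inter.1 hv).2
      (hA.2 v (Finset.mem_inter.1 hv).1 s
        (Finset.sdiff_subset_sdiff Finset.subset_union_right subset_rfl hs))
  have hmedian := crossWeight_add_crossWeight_le_of_median hm hsymm hdeg hΔ hf hlt hgt hin hout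
  have hAL := hfcut _ (hA.inter (f := f) Finset.subset_union_left hFL)
  rw [Finset.sdiff_inter_self_right] at hAL
  have hSS := two_mul_crossWeight_sdiff_le hm hsymm (Finset.inter_subset_right (s₁ := A) (s₂ := S))
  rw [Finset.sdiff_inter_self_right] at hSS
  have hdegS := crossWeight_le_mul_card hdeg S (L ∪ S)
  rw [crossWeight_union_right hLS] at hdegS
  rw [crossWeight_union_sdiff hLS hA.1]
  linarith

end Cutwidth

section CutwidthMinorFree

lemma sqrt_two_mul_six_add_two_mul_sqrt_six : √2 * (6 + 2 * √6) = 6 * √2 + 4 * √3 := by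
  have h6 : √6 = √2 * √3 := by rw [← Real.sqrt_mul (by norm_num)]; norm_num
  rw [h6]
  linear_combination (2 * √3) * Real.mul_self_sqrt (show (0 : ℝ) ≤ 2 by norm_num)

/- The inequality `c / √2 + 5√3 / 2 + 1 / 10 ≤ c` that closes the induction for
`c = 6√2 + 4√3`. -/
lemma six_add_two_mul_sqrt_six_add_le :
    6 + 2 * √6 + 5 * √3 / 2 + 1 / 10 ≤ 6 * √2 + 4 * √3 := by
  have h2 : (1.414 : ℝ) ≤ √2 := Real.le_sqrt_of_sq_le (by norm_num)
  have h3 : (1.732 : ℝ) ≤ √3 := Real.le_sqrt_of_sq_le (by norm_num)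
  have h6 : √6 ≤ 2.4495 := Real.sqrt_le_iff.2 (by norm_num)
  linarith

lemma five_le_six_mul_sqrt_two_add : 5 ≤ 6 * √2 + 4 * √3 := by
  linarith [six_add_two_mul_sqrt_six_add_le, Real.sqrt_nonneg 6, Real.sqrt_nonneg 3]

variable {V : Type*} [DecidableEq V] {m : V → V → ℝ} {Δ : ℝ} {W : Finset V}

lemma cutwidthLE_of_card_le_hundred (hm : ∀ u v, 0 ≤ m u v) (hsymm : ∀ u v, m u v = m v u)
    (hdeg : ∀ u (W : Finset V), ∑ v ∈ W, m u v ≤ Δ) (hΔ : 0 ≤ Δ) (hW : W.card ≤ 100) :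
    CutwidthLE m W ((6 * √2 + 4 * √3) * (Δ * √W.card)) := by
  refine (cutwidthLE_half_mul_card hm hsymm hdeg W).mono ?_
  have hsqrt : √(W.card : ℝ) ≤ 10 :=
    Real.sqrt_le_iff.2 ⟨by norm_num, by norm_num; exact_mod_cast hW⟩
  calc Δ * W.card / 2 = √W.card / 2 * (Δ * √W.card) := by
        linear_combination -(Δ / 2) * Real.mul_self_sqrt (Nat.cast_nonneg (α := ℝ) W.card)
    _ ≤ (6 * √2 + 4 * √3) * (Δ * √W.card) := by
        gcongr
        linarith [five_le_six_mul_sqrt_two_add]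

lemma CutwidthLE.of_two_mul_card_le {K : Finset V} (hΔ : 0 ≤ Δ)
    (hK : CutwidthLE m K ((6 * √2 + 4 * √3) * (Δ * √K.card))) (hKW : 2 * K.card ≤ W.card) :
    CutwidthLE m K ((6 + 2 * √6) * (Δ * √W.card)) := by
  refine hK.mono ?_
  calc (6 * √2 + 4 * √3) * (Δ * √K.card) = (6 + 2 * √6) * (Δ * √(2 * K.card)) := by
        rw [Real.sqrt_mul (by norm_num), ← sqrt_two_mul_six_add_two_mul_sqrt_six]
        ring
    _ ≤ (6 + 2 * √6) * (Δ * √W.card) := by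
        gcongr
        exact_mod_cast hKW

theorem cutwidthLE_of_cliqueMinorFree_five (hm : ∀ u v, 0 ≤ m u v)
    (hsymm : ∀ u v, m u v = m v u) (hdeg : ∀ u (W : Finset V), ∑ v ∈ W, m u v ≤ Δ) (hΔ : 0 ≤ Δ)
    (hminor : CliqueMinorFree (supportGraph m) 5) (W : Finset V) :
    CutwidthLE m W ((6 * √2 + 4 * √3) * (Δ * √W.card)) := by
  induction hn : W.card using Nat.strong_induction_on generalizing W with
  | _ n ih =>
  subst hn
  rcases le_or_gt W.card 100 with hsmall | hlarge
  · exact cutwidthLE_of_card_le_hundred hm hsymm hdeg hΔ hsmall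
  obtain ⟨S, ⟨hSW, hbalanced⟩, hScard⟩ :=
    exists_isBalancedSeparator_of_cliqueMinorFree (by norm_num) hminor W
  have hrest : CutwidthLE m (W \ S) ((6 + 2 * √6) * (Δ * √W.card)) :=
    cutwidthLE_of_connectedOn (by positivity) fun K hK hconn =>
      have hcard := hbalanced K hK hconn
      (ih K.card (by lia) K rfl).of_two_mul_card_le hΔ hcard
  have hunion := hrest.union_of_degree_le hm hsymm hdeg hΔ Finset.sdiff_disjoint
  rw [Finset.sdiff_union_of_subset hSW] at hunion
  refine hunion.mono ?_
  have hS : (S.card : ℝ) ≤ 5 * (√3 * √W.card) := calc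
    (S.card : ℝ) ≤ 5 * (Nat.sqrt (3 * W.card) : ℕ) := by exact_mod_cast hScard
    _ ≤ 5 * √((3 * W.card : ℕ) : ℝ) := by gcongr; exact Real.nat_sqrt_le_real_sqrt
    _ = 5 * (√3 * √W.card) := by rw [Nat.cast_mul, Real.sqrt_mul (by norm_num), Nat.cast_ofNat]
  have hsqrt : 1 ≤ √W.card / 10 := by
    rw [le_div_iff₀ (by norm_num)]
    exact Real.le_sqrt_of_sq_le (by norm_num; exact_mod_cast hlarge.le)
  calc (6 + 2 * √6) * (Δ * √W.card) + Δ * S.card / 2 + Δ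
      = (6 + 2 * √6) * (Δ * √W.card) + Δ * S.card / 2 + Δ * 1 := by rw [mul_one]
    _ ≤ (6 + 2 * √6) * (Δ * √W.card) + Δ * (5 * (√3 * √W.card)) / 2 + Δ * (√W.card / 10) := by
        gcongr
    _ = (6 + 2 * √6 + 5 * √3 / 2 + 1 / 10) * (Δ * √W.card) := by ring
    _ ≤ (6 * √2 + 4 * √3) * (Δ * √W.card) :=
        mul_le_mul_of_nonneg_right six_add_two_mul_sqrt_six_add_le (by positivity)

end CutwidthMinorFree

/-! ### Planar graphs have no complete minor on five vertices -/

section Drawing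

/-- The simple graph on the vertices of `G` in which distinct vertices are adjacent if some edge of
`G` joins them. -/
def underlyingGraph (G : FinMultigraph) : SimpleGraph G.V :=
  SimpleGraph.fromRel fun u v => ∃ e, G.ends e = s(u, v)

lemma underlyingGraph_adj {G : FinMultigraph} {u v : G.V} :
    (underlyingGraph G).Adj u v ↔ u ≠ v ∧ ∃ e, G.ends e = s(u, v) := by
  simp [underlyingGraph, Sym2.eq_swap (a := v)]

/-- A plane drawing of `G` without crossings. As opposed to the embeddings in
`FinMultigraph.IsPlanar`, a single edge may cross itself. -/
structure PlaneDrawing (G : FinMultigraph) where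
  point : G.V → ℝ × ℝ
  curve : G.E → ℝ → ℝ × ℝ
  point_injective : Function.Injective point
  continuousOn_curve : ∀ e, ContinuousOn (curve e) (Set.Icc 0 1)
  exists_ends_eq : ∀ e, ∃ u v, G.ends e = s(u, v) ∧ curve e 0 = point u ∧ curve e 1 = point v
  curve_ne_point : ∀ e, ∀ t ∈ Set.Ioo (0 : ℝ) 1, ∀ v, curve e t ≠ point v
  curve_ne_curve : ∀ e e', e ≠ e' → ∀ t ∈ Set.Ioo (0 : ℝ) 1, ∀ t' ∈ Set.Ioo (0 : ℝ) 1,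
    curve e t ≠ curve e' t'

lemma nonempty_planeDrawing_of_isPlanar {G : FinMultigraph} (hG : G.IsPlanar) :
    Nonempty (PlaneDrawing G) := by
  obtain ⟨point, curve, hinj, hcont, hends, -, hpoint, hcurve⟩ := hG
  exact ⟨point, curve, hinj, hcont, hends, fun e t ht v h => hpoint e t ht ⟨v, h.symm⟩, hcurve⟩

namespace PlaneDrawing

variable {G : FinMultigraph} (D : PlaneDrawing G) {S T : Finset G.V} {u v : G.V}

/-- The part of the plane covered by the drawing of the subgraph induced on `S`. -/
def region (S : Finset G.V) : Set (ℝ × ℝ) :=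
  D.point '' S ∪ ⋃ e ∈ {e | ∀ v ∈ G.ends e, v ∈ S}, D.curve e '' Set.Ioo 0 1

lemma point_mem_region (hv : v ∈ S) : D.point v ∈ D.region S :=
  Or.inl (Set.mem_image_of_mem _ hv)

lemma curve_mem_region {e : G.E} (he : ∀ v ∈ G.ends e, v ∈ S) {t : ℝ} (ht : t ∈ Set.Icc (0 : ℝ) 1) :
    D.curve e t ∈ D.region S := by
  obtain ⟨u, v, huv, h0, h1⟩ := D.exists_ends_eq e
  rcases Set.eq_endpoints_or_mem_Ioo_of_mem_Icc ht with rfl | rfl | ht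
  · exact h0 ▸ D.point_mem_region (he u (by simp [huv]))
  · exact h1 ▸ D.point_mem_region (he v (by simp [huv]))
  · exact Or.inr (Set.mem_biUnion he (Set.mem_image_of_mem _ ht))

lemma disjoint_region (hST : Disjoint S T) : Disjoint (D.region S) (D.region T) := by
  rw [Set.disjoint_left]
  rintro _ (⟨u, hu, rfl⟩ | hz) (⟨v, hv, h⟩ | hz')
  · exact Finset.disjoint_left.1 hST hu (D.point_injective h ▸ hv)
  · obtain ⟨e, -, t, ht, h⟩ := Set.mem_iUnion₂.1 hz'
    exact D.curve_ne_point e t ht u h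
  · obtain ⟨e, -, t, ht, rfl⟩ := Set.mem_iUnion₂.1 hz
    exact D.curve_ne_point e t ht v h.symm
  · obtain ⟨e, he, t, ht, rfl⟩ := Set.mem_iUnion₂.1 hz
    obtain ⟨e', he', t', ht', h⟩ := Set.mem_iUnion₂.1 hz'
    have hne : e ≠ e' := by
      rintro rfl
      obtain ⟨u, v, huv, -⟩ := D.exists_ends_eq e
      have hu : u ∈ G.ends e := huv ▸ Sym2.mem_mk_left u v
      exact Finset.disjoint_left.1 hST (he u hu) (he' u hu)
    exact D.curve_ne_curve e e' hne t ht t' ht' h.symm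

lemma joinedIn_region_of_adj (hu : u ∈ S) (hv : v ∈ S) (huv : (underlyingGraph G).Adj u v) :
    JoinedIn (D.region S) (D.point u) (D.point v) := by
  obtain ⟨-, e, he⟩ := underlyingGraph_adj.1 huv
  obtain ⟨x, y, hxy, h0, h1⟩ := D.exists_ends_eq e
  have hmem : ∀ w ∈ G.ends e, w ∈ S := by simp [he, hu, hv]
  have hjoined : JoinedIn (D.region S) (D.point x) (D.point y) :=
    JoinedIn.ofLine (D.continuousOn_curve e) h0 h1
      (Set.image_subset_iff.2 fun t ht => D.curve_mem_region hmem ht)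
  rcases Sym2.eq_iff.1 (he.symm.trans hxy) with ⟨rfl, rfl⟩ | ⟨rfl, rfl⟩
  exacts [hjoined, hjoined.symm]

lemma joinedIn_region (hS : ConnectedOn (underlyingGraph G) S) (hu : u ∈ S) (hv : v ∈ S) :
    JoinedIn (D.region S) (D.point u) (D.point v) :=
  hS.induction (P := fun w => JoinedIn (D.region S) (D.point u) (D.point w)) hu
    (JoinedIn.refl (D.point_mem_region hu))
    (fun _ hx _ hy hxy h => h.trans (D.joinedIn_region_of_adj hx hy hxy)) hv

end PlaneDrawing

theorem cliqueMinorFree_five_of_isPlanar {G : FinMultigraph} (hG : G.IsPlanar) :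
    CliqueMinorFree (underlyingGraph G) 5 := by
  intro 𝒞 h𝒞
  by_contra! hcard
  obtain ⟨D⟩ := nonempty_planeDrawing_of_isPlanar hG
  obtain ⟨C⟩ : Nonempty (Fin 5 ↪ 𝒞) :=
    Function.Embedding.nonempty_of_card_le (by simpa using hcard)
  have hdisj : ∀ i j, i ≠ j → Disjoint (C i : Finset G.V) (C j) := fun i j hij =>
    h𝒞.disjoint _ (C i).2 _ (C j).2 fun h => hij (C.injective (Subtype.ext h))
  choose c hc using fun i => (h𝒞.connectedOn _ (C i).2).nonempty
  choose γ hγ using fun i j => D.joinedIn_region (h𝒞.connectedOn_union (C i).2 (C j).2)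
    (Finset.mem_union_left _ (hc i)) (Finset.mem_union_right _ (hc j))
  let φ := Complex.equivRealProdCLM.symm
  obtain ⟨i, j, k, l, hik, hil, hjk, hjl, hmeet⟩ :=
    exists_not_disjoint_range_path _ fun i j => (γ i j).map φ.continuous
  refine hmeet ?_
  have hrange : ∀ i j, Set.range ((γ i j).map φ.continuous) ⊆ φ '' D.region (C i ∪ C j) := by
    rintro i j _ ⟨t, rfl⟩
    exact Set.mem_image_of_mem φ (hγ i j t)
  refine Disjoint.mono (hrange i j) (hrange k l)
    ((Set.disjoint_image_iff φ.injective).2 (D.disjoint_region ?_))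
  simp only [Finset.disjoint_union_left, Finset.disjoint_union_right]
  exact ⟨⟨hdisj i k hik, hdisj j k hjk⟩, hdisj i l hil, hdisj j l hjl⟩

end Drawing

/-! ### From weighted cutwidth to the width of a multigraph -/

section Width

variable (G : FinMultigraph)

/-- The number of edges of `G` with endpoints `u` and `v`. -/
noncomputable def edgeMultiplicity (u v : G.V) : ℕ := {e | G.ends e = s(u, v)}.ncard

lemma edgeMultiplicity_comm (u v : G.V) : edgeMultiplicity G u v = edgeMultiplicity G v u := by
  rw [edgeMultiplicity, Sym2.eq_swap, edgeMultiplicity]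

lemma sum_edgeMultiplicity_le_maxDegree (u : G.V) (W : Finset G.V) :
    ∑ v ∈ W, edgeMultiplicity G u v ≤ G.maxDegree := by
  have hdisj : (W : Set G.V).PairwiseDisjoint fun v => {e | G.ends e = s(u, v)} :=
    fun v _ w _ hvw => Set.disjoint_left.2 fun e hv hw =>
      hvw (Sym2.congr_right.1 (Eq.trans (Eq.symm hv) hw))
  calc ∑ v ∈ W, edgeMultiplicity G u v = (⋃ v ∈ W, {e | G.ends e = s(u, v)}).ncard := by
        rw [← finsum_mem_coe_finset]
        exact (W.finite_toSet.ncard_biUnion (fun v _ => Set.toFinite _) hdisj).symm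
    _ ≤ {e | u ∈ G.ends e}.ncard :=
        Set.ncard_le_ncard (Set.iUnion₂_subset fun v _ e he => by simp_all)
    _ ≤ G.degree u := Nat.le_add_right _ _
    _ ≤ G.maxDegree := Finset.le_sup (Finset.mem_univ u)

lemma supportGraph_edgeMultiplicity :
    supportGraph (fun u v => (edgeMultiplicity G u v : ℝ)) = underlyingGraph G := by
  ext u v
  have hpos : ∀ x y, edgeMultiplicity G x y ≠ 0 ↔ ∃ e, G.ends e = s(x, y) := fun x y =>
    Nat.pos_iff_ne_zero.symm.trans Set.ncard_pos
  simp only [supportGraph, underlyingGraph, SimpleGraph.fromRel_adj, Nat.cast_ne_zero, hpos]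

lemma ncard_edgeBoundary_le_crossWeight (A : Finset G.V) :
    ((G.edgeBoundary A).ncard : ℝ) ≤
      crossWeight (fun u v => (edgeMultiplicity G u v : ℝ)) A (Finset.univ \ A) := by
  have hsub : G.edgeBoundary A ⊆
      ⋃ u ∈ A, ⋃ v ∈ Finset.univ \ A, {e | G.ends e = s(u, v)} := by
    rintro e ⟨u, v, he, hu, hv⟩
    simp only [Set.mem_iUnion]
    exact ⟨u, hu, v, by simpa using hv, he⟩
  have hcard : (G.edgeBoundary A).ncard ≤
      ∑ u ∈ A, ∑ v ∈ Finset.univ \ A, edgeMultiplicity G u v := calc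
    _ ≤ (⋃ u ∈ A, ⋃ v ∈ Finset.univ \ A, {e | G.ends e = s(u, v)}).ncard :=
        Set.ncard_le_ncard hsub
    _ ≤ ∑ u ∈ A, (⋃ v ∈ Finset.univ \ A, {e | G.ends e = s(u, v)}).ncard :=
        Finset.set_ncard_biUnion_le _ _
    _ ≤ _ := Finset.sum_le_sum fun u _ => Finset.set_ncard_biUnion_le _ _
  rw [crossWeight]
  exact_mod_cast hcard

variable {G}

lemma width_le_of_cutwidthLE {w : ℝ}
    (h : CutwidthLE (fun u v => (edgeMultiplicity G u v : ℝ)) Finset.univ w) :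
    (G.width : ℝ) ≤ w := by
  have hw : 0 ≤ w := h.nonneg
  obtain ⟨f, hf, hcut⟩ := h
  rw [Finset.coe_univ, Set.injOn_univ] at hf
  let : LinearOrder G.V := LinearOrder.lift' f hf
  let φ : Fin G.order ≃o G.V := Fintype.orderIsoFinOfCardEq G.V rfl
  have hsegment : ∀ i, IsInitialSegment f Finset.univ ((Finset.Iic i).map φ.toEquiv.toEmbedding) :=
    fun i => ⟨Finset.subset_univ _, fun u hu v hv => by
      obtain ⟨j, hj, rfl⟩ := Finset.mem_map.1 hu
      have hv' : ¬ φ.symm v ≤ i := by simpa [φ.symm_apply_eq] using hv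
      have hjv : j < φ.symm v := (Finset.mem_Iic.1 hj).trans_lt (not_le.1 hv')
      exact φ.lt_symm_apply.1 hjv⟩
  have horder : G.orderingWidth φ.toEquiv ≤ ⌊w⌋₊ := Finset.sup_le fun i _ => Nat.le_floor <| by
    have hboundary := (ncard_edgeBoundary_le_crossWeight G _).trans (hcut _ (hsegment i))
    simpa [Set.Iic] using hboundary
  calc (G.width : ℝ) ≤ ⌊w⌋₊ := by
        have hwidth : G.width ≤ G.orderingWidth φ.toEquiv := Nat.sInf_le ⟨_, rfl⟩
        exact_mod_cast hwidth.trans horder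
    _ ≤ w := Nat.floor_le hw

end Width

end PlanarWidth

theorem width_le_of_planar_general (G : FinMultigraph)
    (hG : PlanarWidth.CliqueMinorFree (PlanarWidth.underlyingGraph G) 5) :
    (G.width : ℝ) ≤
      (6 * Real.sqrt 2 + 4 * Real.sqrt 3) * (G.maxDegree : ℝ) *
        Real.sqrt (G.order : ℝ) := by
  rw [← PlanarWidth.supportGraph_edgeMultiplicity] at hG
  rw [mul_assoc]
  exact PlanarWidth.width_le_of_cutwidthLE <|
    PlanarWidth.cutwidthLE_of_cliqueMinorFree_five (fun _ _ => Nat.cast_nonneg _)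
      (fun u v => congrArg Nat.cast (PlanarWidth.edgeMultiplicity_comm G u v))
      (fun u W => by exact_mod_cast PlanarWidth.sum_edgeMultiplicity_le_maxDegree G u W)
      (Nat.cast_nonneg _) hG Finset.univ

/-- Theorem 2.1. Let `G` be a finite planar graph with `v(G)`
vertices and maximal vertex degree `Δ(G)`. Then
`width(G) ≤ (6√2 + 4√3) Δ(G) √(v(G))`. -/
theorem width_le_of_planar (G : FinMultigraph) (hG : G.IsPlanar) :
    (G.width : ℝ) ≤
      (6 * Real.sqrt 2 + 4 * Real.sqrt 3) * (G.maxDegree : ℝ) *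
        Real.sqrt (G.order : ℝ) :=
  width_le_of_planar_general G (PlanarWidth.cliqueMinorFree_five_of_isPlanar hG)
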